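/- ∫₀¹ k(2k²-1) K(k)⁴ dk = (93/16)ζ(5). -/

import Mathlib

open scoped Real
open MeasureTheory

noncomputable def EllK (k : ℝ) : ℝ :=
  ∫ x in (0:ℝ)..(1:ℝ), 1 / Real.sqrt ((1 - x^2) * (1 - k^2 * x^2))

/-!
For the lattice with periods `2` and `2 i y`, the values of `℘` at the half periods give a modulus
`k` with `√(e₁ - e₂) = K` and `y √(e₁ - e₂) = K'`, where `K = K(k)` and `K' = K(√(1 - k²))`, by
inverting `℘` along the sides of the half-period rectangle. The Taylor coefficients of `℘` at
`1 + i y` then evaluate the sum of `(m + i n y)⁻⁶` over odd `m`, `n` as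
`-K⁶ k² (1 - k²) (2 k² - 1) / 15`.

Legendre's relation gives `dy/dk = -π / (2 k (1 - k²) K²)` for `y = K' / K`, so the substitution of
`y` for `k` turns the integral of `k (2 k² - 1) K⁴` over `(0, 1)` into a multiple of the integral of
that lattice sum over `(0, ∞)`. Integrated term by term over `(ε, ∞)`, the terms with a fixed `m`
become a midpoint rule of step `2 ε / m` for the integral of `-Im ((1 + i x)⁻⁵) / x` over `(0, ∞)`,
which equals `π / 2`. As `ε → 0` there remains `∑ m⁻⁵ = (1 - 2⁻⁵) ζ(5)`, summed over odd `m > 0`.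
-/

open Set Filter Topology PeriodPair
open Complex (I)
open scoped ComplexConjugate

section WeierstrassP

variable (L : PeriodPair)

lemma countable_lattice : (L.lattice : Set ℂ).Countable :=
  Set.countable_coe_iff.mp (L.latticeEquivProd.toEquiv.countable_iff.mpr inferInstance)

lemma isPreconnected_compl_lattice : IsPreconnected (L.lattice : Set ℂ)ᶜ :=
  ((countable_lattice L).isConnected_compl_of_one_lt_rank (by simp)).isPreconnected

lemma compl_lattice_mem_nhds {z : ℂ} (hz : z ∉ L.lattice) : (L.lattice : Set ℂ)ᶜ ∈ 𝓝 z :=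
  L.isClosed_lattice.isOpen_compl.mem_nhds hz

lemma eventually_notMem_lattice (a : ℂ) : ∀ᶠ z in 𝓝[≠] a, z ∉ L.lattice := by
  filter_upwards [self_mem_nhdsWithin,
    mem_nhdsWithin_of_mem_nhds (L.compl_lattice_sdiff_singleton_mem_nhds a)] with z hza hz hzL
  exact hz ⟨hzL, hza⟩

lemma hasDerivAt_weierstrassP {z : ℂ} (hz : z ∉ L.lattice) :
    HasDerivAt ℘[L] (℘'[L] z) z := by
  rw [← L.deriv_weierstrassP]
  exact (L.analyticOnNhd_weierstrassP z hz).differentiableAt.hasDerivAt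

lemma tendsto_norm_weierstrassP_zero : Tendsto (fun z ↦ ‖℘[L] z‖) (𝓝[≠] 0) atTop := by
  refine tendsto_norm_cobounded_atTop.comp (tendsto_cobounded_of_meromorphicOrderAt_neg ?_)
  rw [L.order_weierstrassP 0 (zero_mem _)]
  exact WithTop.coe_lt_coe.mpr (by norm_num)

lemma exists_derivWeierstrassP_ne_zero : ∃ z ∉ L.lattice, ℘'[L] z ≠ 0 := by
  by_contra! hzero
  have hconst : ∀ z ∉ L.lattice, ℘[L] z = ℘[L] (L.ω₁ / 2) := fun z hz ↦
    L.isClosed_lattice.isOpen_compl.is_const_of_deriv_eq_zero (isPreconnected_compl_lattice L)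
      L.differentiableOn_weierstrassP (fun w hw ↦ by simpa using hzero w hw) hz
      L.ω₁_div_two_notMem_lattice
  have hlarge := (tendsto_norm_weierstrassP_zero L).eventually_gt_atTop ‖℘[L] (L.ω₁ / 2)‖
  obtain ⟨z, hz, hzL⟩ := (hlarge.and (eventually_notMem_lattice L 0)).exists
  exact hz.ne' (by rw [hconst z hzL])

lemma deriv_derivWeierstrassP {z : ℂ} (hz : z ∉ L.lattice) :
    deriv ℘'[L] z = 6 * ℘[L] z ^ 2 - L.g₂ / 2 := by
  have hP := L.analyticOnNhd_weierstrassP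
  have hP' := L.analyticOnNhd_derivWeierstrassP
  have hmul : ∀ w ∈ (L.lattice : Set ℂ)ᶜ,
      ℘'[L] w * (deriv ℘'[L] w - (6 * ℘[L] w ^ 2 - L.g₂ / 2)) = 0 := fun w hw ↦ by
    have hd := hasDerivAt_weierstrassP L hw
    have hlhs := (hP' w hw).differentiableAt.hasDerivAt.fun_pow 2
    have hrhs := (((hd.fun_pow 3).const_mul 4).fun_sub (hd.const_mul L.g₂)).sub_const L.g₃
    have := (hlhs.congr_of_eventuallyEq <| by
      filter_upwards [compl_lattice_mem_nhds L hw] with v hv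
        using (L.derivWeierstrassP_sq v hv).symm).unique hrhs
    push_cast at this
    linear_combination this / 2
  have hcases := hP'.eq_zero_or_eq_zero_of_mul_eq_zero
    (hP'.deriv.sub ((analyticOnNhd_const.mul (hP.pow 2)).sub analyticOnNhd_const)) hmul
    (isPreconnected_compl_lattice L)
  obtain ⟨w, hw, hne⟩ := exists_derivWeierstrassP_ne_zero L
  exact sub_eq_zero.mp (hcases.resolve_left (fun h ↦ hne (h w hw)) z hz)

lemma iteratedDeriv_weierstrassP {z : ℂ} (hz : z ∉ L.lattice) {n : ℕ} (hn : n ≠ 0) :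
    iteratedDeriv n ℘[L] z = (n + 1).factorial * L.sumInvPow z (n + 2) := by
  obtain ⟨r, hr, hball⟩ := Metric.nhds_basis_closedBall.mem_iff.mp (compl_lattice_mem_nhds L hz)
  have hseries := (L.hasFPowerSeriesOnBall_weierstrassP z ⟨r, hr.le⟩ hr hball).hasFPowerSeriesAt
  have hcoeff := congrArg (·.coeff n)
    ((L.analyticOnNhd_weierstrassP z hz).hasFPowerSeriesAt.eq_formalMultilinearSeries hseries)
  simp only [FormalMultilinearSeries.coeff_ofScalars, weierstrassPSeries, hn, if_false] at hcoeff
  rw [div_eq_iff (mod_cast n.factorial_ne_zero)] at hcoeff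
  rw [hcoeff, Nat.factorial_succ]
  push_cast
  ring

lemma five_mul_sumInvPow_six {z : ℂ} (hz : z ∉ L.lattice) :
    5 * L.sumInvPow z 6 = (℘'[L] z ^ 2 + ℘[L] z * (6 * ℘[L] z ^ 2 - L.g₂ / 2)) / 2 := by
  have hsecond : ∀ w ∉ L.lattice, iteratedDeriv 2 ℘[L] w = 6 * ℘[L] w ^ 2 - L.g₂ / 2 :=
    fun w hw ↦ by
      rw [iteratedDeriv_succ, iteratedDeriv_one, L.deriv_weierstrassP, deriv_derivWeierstrassP L hw]
  have hthird : ∀ w ∉ L.lattice, iteratedDeriv 3 ℘[L] w = 12 * (℘[L] w * ℘'[L] w) := fun w hw ↦ by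
    rw [iteratedDeriv_succ, (eventuallyEq_of_mem (compl_lattice_mem_nhds L hw) hsecond).deriv_eq,
      ((((hasDerivAt_weierstrassP L hw).fun_pow 2).const_mul 6).sub_const _).deriv]
    push_cast
    ring
  have hfourth : iteratedDeriv 4 ℘[L] z =
      12 * (℘'[L] z * ℘'[L] z + ℘[L] z * (6 * ℘[L] z ^ 2 - L.g₂ / 2)) := by
    have hd' := (L.analyticOnNhd_derivWeierstrassP z hz).differentiableAt.hasDerivAt
    rw [iteratedDeriv_succ, (eventuallyEq_of_mem (compl_lattice_mem_nhds L hz) hthird).deriv_eq,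
      (((hasDerivAt_weierstrassP L hz).fun_mul hd').const_mul 12).deriv,
      deriv_derivWeierstrassP L hz]
  have hcoeff := iteratedDeriv_weierstrassP L hz four_ne_zero
  norm_num [Nat.factorial] at hcoeff
  linear_combination (hfourth - hcoeff) / 24

/-- The difference of two solutions of `u'' = 6 u ^ 2 - c` with the same initial data satisfies a
linear homogeneous equation of order two, so it cannot have a zero of finite order. -/
lemma eventuallyEq_of_deriv_deriv_eq_six_mul_sq {u v : ℂ → ℂ} {c z : ℂ} (hu : AnalyticAt ℂ u z)
    (hv : AnalyticAt ℂ v z) (hu'' : ∀ᶠ w in 𝓝 z, deriv (deriv u) w = 6 * u w ^ 2 - c)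
    (hv'' : ∀ᶠ w in 𝓝 z, deriv (deriv v) w = 6 * v w ^ 2 - c)
    (h0 : u z = v z) (h1 : deriv u z = deriv v z) : u =ᶠ[𝓝 z] v := by
  have hd := hu.sub hv
  have hderiv : deriv (u - v) =ᶠ[𝓝 z] deriv u - deriv v := by
    filter_upwards [hu.eventually_analyticAt, hv.eventually_analyticAt] with w hw hw'
    exact deriv_sub hw.differentiableAt hw'.differentiableAt
  have hlinear : deriv (deriv (u - v)) =ᶠ[𝓝 z] (fun w ↦ 6 * (u w + v w)) * (u - v) := by
    filter_upwards [hderiv.eventuallyEq_nhds, hu.deriv.eventually_analyticAt,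
      hv.deriv.eventually_analyticAt, hu'', hv''] with w hw hwu hwv hu hv
    rw [hw.deriv_eq, deriv_sub hwu.differentiableAt hwv.differentiableAt, hu, hv]
    simp only [Pi.mul_apply, Pi.sub_apply]
    ring
  have horder : analyticOrderAt (deriv (deriv (u - v))) z + 2 = analyticOrderAt (u - v) z := by
    have hfirst := hd.analyticOrderAt_deriv_add_one
    have hsecond := hd.deriv.analyticOrderAt_deriv_add_one
    simp only [Pi.sub_apply, h0, sub_self, sub_zero] at hfirst
    rw [hderiv.self_of_nhds, Pi.sub_apply, h1, sub_self] at hsecond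
    simp only [sub_zero] at hsecond
    rw [show u - v = fun w ↦ u w - v w from rfl, ← hfirst, ← one_add_one_eq_two, ← add_assoc]
    exact congrArg (· + 1) hsecond
  have hle : analyticOrderAt (u - v) z ≤ analyticOrderAt (deriv (deriv (u - v))) z := by
    rw [analyticOrderAt_congr hlinear, analyticOrderAt_mul (by fun_prop) hd]
    exact le_add_self
  have htop : analyticOrderAt (u - v) z = ⊤ := by
    by_contra hfinite
    rw [← horder] at hle hfinite
    lift analyticOrderAt (deriv (deriv (u - v))) z to ℕ using
      fun h ↦ hfinite (by rw [h, top_add]) with n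
    norm_cast at hle
    lia
  filter_upwards [analyticOrderAt_eq_top.mp htop] with w hw using sub_eq_zero.mp hw

lemma mem_lattice_of_eventually_weierstrassP_add_eq {a d : ℂ} (ha : a ∉ L.lattice)
    (had : a + d ∉ L.lattice) (h : ∀ᶠ z in 𝓝 a, ℘[L] (z + d) = ℘[L] z) : d ∈ L.lattice := by
  by_contra hd
  have hcountable : (L.lattice ∪ (· + d) ⁻¹' L.lattice : Set ℂ).Countable :=
    (countable_lattice L).union ((countable_lattice L).preimage (add_left_injective d))
  have hanalytic : AnalyticOnNhd ℂ (fun z ↦ ℘[L] (z + d))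
      (L.lattice ∪ (· + d) ⁻¹' L.lattice : Set ℂ)ᶜ := fun z hz ↦
    (L.analyticOnNhd_weierstrassP (z + d) fun hzd ↦ hz (Or.inr hzd)).comp (f := (· + d))
      (by fun_prop)
  have heqOn := hanalytic.eqOn_of_preconnected_of_eventuallyEq
    (L.analyticOnNhd_weierstrassP.mono (compl_subset_compl.mpr subset_union_left))
    (hcountable.isConnected_compl_of_one_lt_rank (by simp)).isPreconnected
    (by simp [ha, had]) h
  have hadd : Tendsto (· + d) (𝓝 0) (𝓝 d) := by simpa using (continuous_add_const d).tendsto 0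
  have hbounded : ∀ᶠ z in 𝓝[≠] 0, ‖℘[L] (z + d)‖ < ‖℘[L] d‖ + 1 :=
    (((hasDerivAt_weierstrassP L hd).continuousAt.tendsto.comp hadd).norm.eventually_lt_const
      (lt_add_one _)).filter_mono nhdsWithin_le_nhds
  have hadd_notMem : ∀ᶠ z in 𝓝[≠] 0, z + d ∉ L.lattice :=
    (hadd.eventually (compl_lattice_mem_nhds L hd)).filter_mono nhdsWithin_le_nhds
  obtain ⟨z, hz, hzd, hlt, hgt⟩ := ((eventually_notMem_lattice L 0).and <| hadd_notMem.and <|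
    hbounded.and <| (tendsto_norm_weierstrassP_zero L).eventually_gt_atTop (‖℘[L] d‖ + 1)).exists
  rw [← heqOn (show z ∈ _ by simp [hz, hzd])] at hgt
  exact hlt.not_gt hgt

lemma mem_lattice_of_weierstrassP_add_eq_of_derivWeierstrassP_add_eq {a d : ℂ}
    (ha : a ∉ L.lattice) (had : a + d ∉ L.lattice) (h : ℘[L] (a + d) = ℘[L] a)
    (h' : ℘'[L] (a + d) = ℘'[L] a) : d ∈ L.lattice := by
  refine mem_lattice_of_eventually_weierstrassP_add_eq L ha had ?_
  have hderiv : deriv (fun z ↦ ℘[L] (z + d)) = fun z ↦ ℘'[L] (z + d) := by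
    ext z
    rw [deriv_comp_add_const, L.deriv_weierstrassP]
  refine eventuallyEq_of_deriv_deriv_eq_six_mul_sq (c := L.g₂ / 2)
    ((L.analyticOnNhd_weierstrassP (a + d) had).comp (f := (· + d)) (by fun_prop))
    (L.analyticOnNhd_weierstrassP a ha) ?_ ?_ h ?_
  · filter_upwards [(continuous_add_const d).tendsto a (compl_lattice_mem_nhds L had)] with z hz
    rw [hderiv, deriv_comp_add_const, deriv_derivWeierstrassP L hz]
  · filter_upwards [compl_lattice_mem_nhds L ha] with z hz
    rw [L.deriv_weierstrassP, deriv_derivWeierstrassP L hz]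
  · simpa only [hderiv, L.deriv_weierstrassP] using h'

lemma weierstrassP_eq_iff {a b : ℂ} (ha : a ∉ L.lattice) (hb : b ∉ L.lattice) :
    ℘[L] a = ℘[L] b ↔ a - b ∈ L.lattice ∨ a + b ∈ L.lattice := by
  refine ⟨fun h ↦ ?_, ?_⟩
  · have hsq : ℘'[L] a ^ 2 = ℘'[L] b ^ 2 := by
      rw [L.derivWeierstrassP_sq a ha, L.derivWeierstrassP_sq b hb, h]
    rcases sq_eq_sq_iff_eq_or_eq_neg.mp hsq with h' | h'
    · exact .inl <| mem_lattice_of_weierstrassP_add_eq_of_derivWeierstrassP_add_eq L hb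
        (by simpa) (by simpa) (by simpa)
    · exact .inr <| mem_lattice_of_weierstrassP_add_eq_of_derivWeierstrassP_add_eq L (a := -b)
        (by simpa) (by simpa) (by simpa) (by simpa)
  · rintro (h | h)
    · simpa using L.weierstrassP_add_coe b ⟨a - b, h⟩
    · simpa using L.weierstrassP_add_coe (-b) ⟨a + b, h⟩

lemma derivWeierstrassP_eq_zero_iff {z : ℂ} (hz : z ∉ L.lattice) :
    ℘'[L] z = 0 ↔ 2 * z ∈ L.lattice := by
  have hadd : -z + 2 * z = z := by ring
  refine ⟨fun h ↦ ?_, fun h ↦ ?_⟩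
  · exact mem_lattice_of_weierstrassP_add_eq_of_derivWeierstrassP_add_eq L (a := -z)
      (by simpa) (by rwa [hadd]) (by simp [hadd]) (by simp [hadd, h])
  · have hperiodic := L.derivWeierstrassP_add_coe (-z) ⟨2 * z, h⟩
    simp only [hadd, L.derivWeierstrassP_neg] at hperiodic
    exact CharZero.eq_neg_self_iff.mp hperiodic

/-- Half periods `h₁`, `h₂` that represent, together with `h₁ + h₂`, distinct nonzero classes modulo
the lattice of `L`. -/
structure IsHalfPeriodPair (L : PeriodPair) (h₁ h₂ : ℂ) : Prop where
  two_mul_left_mem : 2 * h₁ ∈ L.lattice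
  two_mul_right_mem : 2 * h₂ ∈ L.lattice
  left_notMem : h₁ ∉ L.lattice
  right_notMem : h₂ ∉ L.lattice
  add_notMem : h₁ + h₂ ∉ L.lattice

lemma weierstrass_cubic_eq_zero {h : ℂ} (hh : h ∉ L.lattice) (h2 : 2 * h ∈ L.lattice) :
    4 * ℘[L] h ^ 3 + -L.g₂ * ℘[L] h + -L.g₃ = 0 := by
  have := L.derivWeierstrassP_sq h hh
  rw [(derivWeierstrassP_eq_zero_iff L hh).mpr h2] at this
  linear_combination -this

lemma vieta_depressed_cubic {R : Type*} [CommRing R] [IsDomain R] {p q r a b c : R} (hp : p ≠ 0)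
    (ha : p * a ^ 3 + q * a + r = 0) (hb : p * b ^ 3 + q * b + r = 0)
    (hc : p * c ^ 3 + q * c + r = 0) (hab : a ≠ b) (hac : a ≠ c) (hbc : b ≠ c) :
    a + b + c = 0 ∧ q = p * (a * b + a * c + b * c) ∧ r = -p * (a * b * c) := by
  have hqab : p * (a ^ 2 + a * b + b ^ 2) + q = 0 :=
    mul_left_cancel₀ (sub_ne_zero.mpr hab) (by linear_combination ha - hb)
  have hqac : p * (a ^ 2 + a * c + c ^ 2) + q = 0 :=
    mul_left_cancel₀ (sub_ne_zero.mpr hac) (by linear_combination ha - hc)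
  have hsum : a + b + c = 0 :=
    mul_left_cancel₀ (mul_ne_zero hp (sub_ne_zero.mpr hbc)) (by linear_combination hqab - hqac)
  have hq : q = p * (a * b + a * c + b * c) := by
    linear_combination hqab - p * (a + b) * hsum
  refine ⟨hsum, hq, ?_⟩
  linear_combination ha - a * hq - p * a ^ 2 * hsum

namespace IsHalfPeriodPair

variable {L} {h₁ h₂ : ℂ}

lemma symm (h : IsHalfPeriodPair L h₁ h₂) : IsHalfPeriodPair L h₂ h₁ where
  two_mul_left_mem := h.two_mul_right_mem
  two_mul_right_mem := h.two_mul_left_mem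
  left_notMem := h.right_notMem
  right_notMem := h.left_notMem
  add_notMem := add_comm h₁ h₂ ▸ h.add_notMem

lemma two_mul_add_mem (h : IsHalfPeriodPair L h₁ h₂) : 2 * (h₁ + h₂) ∈ L.lattice :=
  mul_add (2 : ℂ) h₁ h₂ ▸ add_mem h.two_mul_left_mem h.two_mul_right_mem

lemma weierstrassP_left_ne_right (h : IsHalfPeriodPair L h₁ h₂) : ℘[L] h₁ ≠ ℘[L] h₂ := by
  rw [Ne, weierstrassP_eq_iff L h.left_notMem h.right_notMem]
  rintro (hsub | hadd)
  · refine h.add_notMem ?_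
    convert add_mem hsub h.two_mul_right_mem using 1
    ring
  · exact h.add_notMem hadd

lemma weierstrassP_left_ne_add (h : IsHalfPeriodPair L h₁ h₂) : ℘[L] h₁ ≠ ℘[L] (h₁ + h₂) := by
  rw [Ne, weierstrassP_eq_iff L h.left_notMem h.add_notMem]
  rintro (hsub | hadd)
  · exact h.right_notMem (by simpa using hsub)
  · rw [← add_assoc, ← two_mul, L.lattice.add_mem_iff_right h.two_mul_left_mem] at hadd
    exact h.right_notMem hadd

lemma weierstrassP_right_ne_add (h : IsHalfPeriodPair L h₁ h₂) : ℘[L] h₂ ≠ ℘[L] (h₁ + h₂) :=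
  add_comm h₁ h₂ ▸ h.symm.weierstrassP_left_ne_add

lemma vieta (h : IsHalfPeriodPair L h₁ h₂) :
    ℘[L] h₁ + ℘[L] h₂ + ℘[L] (h₁ + h₂) = 0 ∧
      -L.g₂ = 4 * (℘[L] h₁ * ℘[L] h₂ + ℘[L] h₁ * ℘[L] (h₁ + h₂) + ℘[L] h₂ * ℘[L] (h₁ + h₂)) ∧
      -L.g₃ = -4 * (℘[L] h₁ * ℘[L] h₂ * ℘[L] (h₁ + h₂)) :=
  vieta_depressed_cubic (OfNat.ofNat_ne_zero 4)
    (weierstrass_cubic_eq_zero L h.left_notMem h.two_mul_left_mem)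
    (weierstrass_cubic_eq_zero L h.right_notMem h.two_mul_right_mem)
    (weierstrass_cubic_eq_zero L h.add_notMem h.two_mul_add_mem)
    h.weierstrassP_left_ne_right h.weierstrassP_left_ne_add h.weierstrassP_right_ne_add

lemma derivWeierstrassP_sq (h : IsHalfPeriodPair L h₁ h₂) {z : ℂ} (hz : z ∉ L.lattice) :
    ℘'[L] z ^ 2 =
      4 * (℘[L] z - ℘[L] h₁) * (℘[L] z - ℘[L] h₂) * (℘[L] z - ℘[L] (h₁ + h₂)) := by
  obtain ⟨hsum, hg₂, hg₃⟩ := h.vieta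
  rw [L.derivWeierstrassP_sq z hz]
  linear_combination 4 * ℘[L] z ^ 2 * hsum + ℘[L] z * hg₂ + hg₃

lemma five_mul_sumInvPow_add_six (h : IsHalfPeriodPair L h₁ h₂) :
    5 * L.sumInvPow (h₁ + h₂) 6 =
      ℘[L] (h₁ + h₂) * (℘[L] (h₁ + h₂) - ℘[L] h₁) * (℘[L] (h₁ + h₂) - ℘[L] h₂) := by
  obtain ⟨hsum, hg₂, -⟩ := h.vieta
  rw [five_mul_sumInvPow_six L h.add_notMem,
    (derivWeierstrassP_eq_zero_iff L h.add_notMem).mpr h.two_mul_add_mem]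
  linear_combination ℘[L] (h₁ + h₂) * (hg₂ / 4 + 2 * ℘[L] (h₁ + h₂) * hsum)

end IsHalfPeriodPair

end WeierstrassP

section EllipticODE

variable {f f' : ℝ → ℝ} {a b : ℝ}

lemma sub_mul_sub_pos_of_deriv_ne_zero (hf : ContinuousOn f (Icc a b))
    (hf' : ∀ t ∈ Ioo a b, HasDerivAt f (f' t) t) (hne : ∀ t ∈ Ioo a b, f' t ≠ 0) {t : ℝ}
    (ht : t ∈ Ioo a b) : 0 < (f t - f a) * (f b - f t) := by
  have hab : a ≤ b := (ht.1.trans ht.2).le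
  have hmem := Ioo_subset_Icc_self ht
  have hwithin : ∀ s ∈ interior (Icc a b), HasDerivWithinAt f (f' s) (interior (Icc a b)) s := by
    simpa only [interior_Icc] using fun s hs ↦ (hf' s hs).hasDerivWithinAt
  rcases hasDerivWithinAt_forall_lt_or_forall_gt_of_forall_ne (convex_Icc a b).interior hwithin
    (by simpa only [interior_Icc] using hne) with hneg | hpos
  · have hanti := strictAntiOn_of_hasDerivWithinAt_neg (convex_Icc a b) hf hwithin hneg
    exact mul_pos_of_neg_of_neg (sub_neg.mpr (hanti (left_mem_Icc.mpr hab) hmem ht.1))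
      (sub_neg.mpr (hanti hmem (right_mem_Icc.mpr hab) ht.2))
  · have hmono := strictMonoOn_of_hasDerivWithinAt_pos (convex_Icc a b) hf hwithin hpos
    exact mul_pos (sub_pos.mpr (hmono (left_mem_Icc.mpr hab) hmem ht.1))
      (sub_pos.mpr (hmono hmem (right_mem_Icc.mpr hab) ht.2))

lemma deriv_pos_of_ne_zero_of_lt (hf : ContinuousOn f (Icc a b))
    (hf' : ∀ t ∈ Ioo a b, HasDerivAt f (f' t) t) (hne : ∀ t ∈ Ioo a b, f' t ≠ 0) (hab : a < b)
    (hfab : f a < f b) : ∀ t ∈ Ioo a b, 0 < f' t := by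
  refine (hasDerivWithinAt_forall_lt_or_forall_gt_of_forall_ne (convex_Ioo a b)
    (fun t ht ↦ (hf' t ht).hasDerivWithinAt) hne).resolve_left fun hneg ↦ ?_
  obtain ⟨t, ht, hslope⟩ := exists_hasDerivAt_eq_slope f f' hab hf hf'
  have := hneg t ht
  rw [hslope] at this
  exact this.not_ge (div_nonneg (sub_nonneg.mpr hfab.le) (sub_nonneg.mpr hab.le))

lemma endpoints_lt_of_deriv_sq_eq {γ : ℝ} (hab : a < b) (haγ : f a ≠ γ) (hbγ : f b ≠ γ)
    (hf : ContinuousOn f (Icc a b)) (hf' : ∀ t ∈ Ioo a b, HasDerivAt f (f' t) t)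
    (hne : ∀ t ∈ Ioo a b, f' t ≠ 0)
    (hode : ∀ t ∈ Ioo a b, f' t ^ 2 = 4 * (f t - f a) * (f b - f t) * (γ - f t)) :
    f a < γ ∧ f b < γ := by
  have hIoo : ∀ t ∈ Ioo a b, f t ≤ γ := fun t ht ↦ by
    have hsq := sq_pos_of_ne_zero (hne t ht)
    rw [hode t ht, mul_assoc 4] at hsq
    exact sub_nonneg.mp (pos_of_mul_pos_right hsq
      (mul_pos four_pos (sub_mul_sub_pos_of_deriv_ne_zero hf hf' hne ht)).le).le
  have hIcc : ∀ t ∈ Icc a b, f t ≤ γ := fun t ht ↦ by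
    rw [← closure_Ioo hab.ne] at ht hf
    exact le_on_closure hIoo hf continuousOn_const ht
  exact ⟨(hIcc a (left_mem_Icc.mpr hab.le)).lt_of_ne haγ,
    (hIcc b (right_mem_Icc.mpr hab.le)).lt_of_ne hbγ⟩

lemma EllK_eq_integral_comp {s s' : ℝ → ℝ} (k : ℝ) (hab : a ≤ b) (hs : ContinuousOn s (Icc a b))
    (hs' : ∀ t ∈ Ioo a b, HasDerivAt s (s' t) t) (hnonneg : ∀ t ∈ Ioo a b, 0 ≤ s' t)
    (ha : s a = 0) (hb : s b = 1) :
    EllK k = ∫ t in Ioo a b, s' t / √((1 - s t ^ 2) * (1 - k ^ 2 * s t ^ 2)) := by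
  have hsubst := intervalIntegral.integral_deriv_smul_comp_of_deriv_nonneg
    (f := s) (f' := s') (a := a) (b := b)
    (g := fun x ↦ 1 / √((1 - x ^ 2) * (1 - k ^ 2 * x ^ 2)))
    (by rwa [uIcc_of_le hab]) (by simpa only [min_eq_left hab, max_eq_right hab] using hs')
    (by simpa only [min_eq_left hab, max_eq_right hab] using hnonneg)
  rw [ha, hb, intervalIntegral.integral_of_le hab, integral_Ioc_eq_integral_Ioo] at hsubst
  simpa only [EllK, Function.comp_apply, smul_eq_mul, mul_one_div] using hsubst.symm

lemma EllK_eq_mul_of_deriv_sq_eq {s s' : ℝ → ℝ} {k c : ℝ} (hab : a ≤ b) (hc : 0 < c)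
    (hs : ContinuousOn s (Icc a b)) (hs' : ∀ t ∈ Ioo a b, HasDerivAt s (s' t) t)
    (hpos : ∀ t ∈ Ioo a b, 0 < s' t) (ha : s a = 0) (hb : s b = 1)
    (hode : ∀ t ∈ Ioo a b, s' t ^ 2 = c ^ 2 * ((1 - s t ^ 2) * (1 - k ^ 2 * s t ^ 2))) :
    EllK k = c * (b - a) := by
  rw [EllK_eq_integral_comp k hab hs hs' (fun t ht ↦ (hpos t ht).le) ha hb,
    setIntegral_congr_fun (g := fun _ ↦ c) measurableSet_Ioo]
  · simp [hab, mul_comm]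
  · intro t ht
    have hrad : (1 - s t ^ 2) * (1 - k ^ 2 * s t ^ 2) = (s' t / c) ^ 2 := by
      rw [div_pow, hode t ht, mul_div_cancel_left₀ _ (pow_pos hc 2).ne']
    have := (hpos t ht).ne'
    simp only [hrad, Real.sqrt_sq (div_pos (hpos t ht) hc).le]
    field_simp

/-- The substitution `s = √((f - f a) / (f b - f a))` turns the Weierstrass normal form into the
Legendre normal form. -/
lemma EllK_eq_of_deriv_sq_eq {γ : ℝ} (hab : a < b) (hfab : f a < f b) (hbγ : f b < γ)
    (hf : ContinuousOn f (Icc a b)) (hf' : ∀ t ∈ Ioo a b, HasDerivAt f (f' t) t)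
    (hne : ∀ t ∈ Ioo a b, f' t ≠ 0)
    (hode : ∀ t ∈ Ioo a b, f' t ^ 2 = 4 * (f t - f a) * (f b - f t) * (γ - f t)) :
    EllK √((f b - f a) / (γ - f a)) = √(γ - f a) * (b - a) := by
  have hΔ : 0 < f b - f a := sub_pos.mpr hfab
  have hγ : 0 < γ - f a := by linarith
  have hf'pos := deriv_pos_of_ne_zero_of_lt hf hf' hne hab hfab
  have hratio : ∀ t ∈ Ioo a b, 0 < (f t - f a) / (f b - f a) := fun t ht ↦ by
    refine div_pos (sub_pos.mpr ?_) hΔ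
    refine strictMonoOn_of_hasDerivWithinAt_pos (f' := f') (convex_Icc a b) hf ?_ ?_
      (left_mem_Icc.mpr hab.le) (Ioo_subset_Icc_self ht) ht.1
    · simpa only [interior_Icc] using fun s hs ↦ (hf' s hs).hasDerivWithinAt
    · simpa only [interior_Icc] using hf'pos
  refine EllK_eq_mul_of_deriv_sq_eq (s := fun t ↦ √((f t - f a) / (f b - f a)))
    (s' := fun t ↦ f' t / (f b - f a) / (2 * √((f t - f a) / (f b - f a)))) hab.le
    (Real.sqrt_pos.mpr hγ) ((hf.sub continuousOn_const).div_const _).sqrt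
    (fun t ht ↦ (((hf' t ht).sub_const _).div_const _).sqrt (hratio t ht).ne') (fun t ht ↦ ?_)
    (by simp) (by simp [hΔ.ne']) (fun t ht ↦ ?_)
  · have := hf'pos t ht
    have := Real.sqrt_pos.mpr (hratio t ht)
    positivity
  · have hfta : f t - f a ≠ 0 := fun h0 ↦ by simpa [h0] using hratio t ht
    rw [Real.sq_sqrt hγ.le, Real.sq_sqrt (hratio t ht).le, Real.sq_sqrt (div_pos hΔ hγ).le,
      div_pow, mul_pow, Real.sq_sqrt (hratio t ht).le, div_pow, hode t ht]
    field_simp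
    norm_num

end EllipticODE

section RealLine

variable {L : PeriodPair} {h d : ℂ}

/-- Half periods `d`, `h` such that the line `h + ℝ d` avoids the lattice, contains no half period
strictly between `h` and `h + d`, and carries real values of `d ^ 2 * ℘`. -/
structure IsRealHalfPeriodLine (L : PeriodPair) (h d : ℂ) : Prop extends
    IsHalfPeriodPair L d h where
  notMem (t : ℝ) : h + t * d ∉ L.lattice
  two_mul_notMem (t : ℝ) (ht : t ∈ Ioo 0 1) : 2 * (h + t * d) ∉ L.lattice
  im_eq_zero (t : ℝ) : (d ^ 2 * ℘[L] (h + t * d)).im = 0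

/-- The function `℘` on the line `h + ℝ d`, in terms of the real coordinate. The factor `d ^ 2`
makes it satisfy a differential equation of the same form as that of `℘`. -/
noncomputable def weierstrassPOnLine (L : PeriodPair) (h d : ℂ) (t : ℝ) : ℝ :=
  (d ^ 2 * ℘[L] (h + t * d)).re

namespace IsRealHalfPeriodLine

lemma ofReal_weierstrassPOnLine (hl : IsRealHalfPeriodLine L h d) (t : ℝ) :
    (weierstrassPOnLine L h d t : ℂ) = d ^ 2 * ℘[L] (h + t * d) :=
  Complex.ext rfl (hl.im_eq_zero t).symm

lemma ofReal_weierstrassPOnLine_zero (hl : IsRealHalfPeriodLine L h d) :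
    (weierstrassPOnLine L h d 0 : ℂ) = d ^ 2 * ℘[L] h := by
  simp [hl.ofReal_weierstrassPOnLine]

lemma ofReal_weierstrassPOnLine_one (hl : IsRealHalfPeriodLine L h d) :
    (weierstrassPOnLine L h d 1 : ℂ) = d ^ 2 * ℘[L] (d + h) := by
  simp [hl.ofReal_weierstrassPOnLine, add_comm]

lemma sq_mul_weierstrassP_eq (hl : IsRealHalfPeriodLine L h d) :
    d ^ 2 * ℘[L] d = ↑(-(weierstrassPOnLine L h d 0 + weierstrassPOnLine L h d 1)) := by
  push_cast
  rw [hl.ofReal_weierstrassPOnLine_zero, hl.ofReal_weierstrassPOnLine_one]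
  linear_combination d ^ 2 * hl.vieta.1

lemma hasDerivAt_sq_mul_weierstrassP (hl : IsRealHalfPeriodLine L h d) (t : ℝ) :
    HasDerivAt (fun t : ℝ ↦ d ^ 2 * ℘[L] (h + t * d)) (d ^ 3 * ℘'[L] (h + t * d)) t := by
  have hline : HasDerivAt (fun t : ℝ ↦ h + t * d) d t := by
    simpa using ((Complex.ofRealCLM.hasDerivAt (x := t)).mul_const d).const_add h
  exact (((hasDerivAt_weierstrassP L (hl.notMem t)).comp t hline).const_mul (d ^ 2)).congr_deriv
    (by ring)

lemma hasDerivAt_weierstrassPOnLine (hl : IsRealHalfPeriodLine L h d) (t : ℝ) :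
    HasDerivAt (weierstrassPOnLine L h d) (d ^ 3 * ℘'[L] (h + t * d)).re t :=
  Complex.reCLM.hasFDerivAt.comp_hasDerivAt t (hl.hasDerivAt_sq_mul_weierstrassP t)

lemma ofReal_deriv_weierstrassPOnLine (hl : IsRealHalfPeriodLine L h d) (t : ℝ) :
    ((d ^ 3 * ℘'[L] (h + t * d)).re : ℂ) = d ^ 3 * ℘'[L] (h + t * d) := by
  have hofReal := (hl.hasDerivAt_weierstrassPOnLine t).ofReal_comp
  simp only [hl.ofReal_weierstrassPOnLine] at hofReal
  exact hofReal.unique (hl.hasDerivAt_sq_mul_weierstrassP t)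

lemma deriv_weierstrassPOnLine_ne_zero (hl : IsRealHalfPeriodLine L h d) {t : ℝ}
    (ht : t ∈ Ioo 0 1) : (d ^ 3 * ℘'[L] (h + t * d)).re ≠ 0 := by
  have hd : d ≠ 0 := fun hd ↦ hl.left_notMem (hd ▸ zero_mem _)
  rw [← Complex.ofReal_ne_zero, hl.ofReal_deriv_weierstrassPOnLine]
  exact mul_ne_zero (pow_ne_zero 3 hd)
    (mt (derivWeierstrassP_eq_zero_iff L (hl.notMem t)).mp (hl.two_mul_notMem t ht))

lemma deriv_weierstrassPOnLine_sq (hl : IsRealHalfPeriodLine L h d) (t : ℝ) :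
    (d ^ 3 * ℘'[L] (h + t * d)).re ^ 2 =
      4 * (weierstrassPOnLine L h d t - weierstrassPOnLine L h d 0) *
        (weierstrassPOnLine L h d 1 - weierstrassPOnLine L h d t) *
        (-(weierstrassPOnLine L h d 0 + weierstrassPOnLine L h d 1) -
          weierstrassPOnLine L h d t) := by
  apply Complex.ofReal_injective
  rw [Complex.ofReal_mul, Complex.ofReal_sub (-_), ← hl.sq_mul_weierstrassP_eq]
  push_cast
  rw [hl.ofReal_deriv_weierstrassPOnLine, hl.ofReal_weierstrassPOnLine t,
    hl.ofReal_weierstrassPOnLine_zero, hl.ofReal_weierstrassPOnLine_one]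
  linear_combination d ^ 6 * hl.derivWeierstrassP_sq (hl.notMem t)

lemma continuousOn_weierstrassPOnLine (hl : IsRealHalfPeriodLine L h d) (s : Set ℝ) :
    ContinuousOn (weierstrassPOnLine L h d) s :=
  fun t _ ↦ (hl.hasDerivAt_weierstrassPOnLine t).continuousAt.continuousWithinAt

lemma weierstrassPOnLine_endpoints_lt (hl : IsRealHalfPeriodLine L h d) :
    weierstrassPOnLine L h d 0 < -(weierstrassPOnLine L h d 0 + weierstrassPOnLine L h d 1) ∧
      weierstrassPOnLine L h d 1 <
        -(weierstrassPOnLine L h d 0 + weierstrassPOnLine L h d 1) := by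
  have hd : d ^ 2 ≠ 0 := pow_ne_zero 2 fun hd ↦ hl.left_notMem (hd ▸ zero_mem _)
  refine endpoints_lt_of_deriv_sq_eq one_pos ?_ ?_ (hl.continuousOn_weierstrassPOnLine _)
    (fun t _ ↦ hl.hasDerivAt_weierstrassPOnLine t)
    (fun t ht ↦ hl.deriv_weierstrassPOnLine_ne_zero ht)
    (fun t _ ↦ hl.deriv_weierstrassPOnLine_sq t)
  · rw [← Complex.ofReal_injective.ne_iff, ← hl.sq_mul_weierstrassP_eq,
      hl.ofReal_weierstrassPOnLine_zero, (mul_right_injective₀ hd).ne_iff]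
    exact hl.weierstrassP_left_ne_right.symm
  · rw [← Complex.ofReal_injective.ne_iff, ← hl.sq_mul_weierstrassP_eq,
      hl.ofReal_weierstrassPOnLine_one, (mul_right_injective₀ hd).ne_iff]
    exact hl.weierstrassP_left_ne_add.symm

lemma EllK_eq_sqrt (hl : IsRealHalfPeriodLine L h d) {e₁ e₂ e₃ : ℝ}
    (h₂ : weierstrassPOnLine L h d 0 = e₂) (h₃ : weierstrassPOnLine L h d 1 = e₃)
    (hsum : e₁ + e₂ + e₃ = 0) (hlt : e₂ < e₃) :
    EllK √((e₃ - e₂) / (e₁ - e₂)) = √(e₁ - e₂) := by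
  subst h₂ h₃
  obtain rfl : e₁ = -(weierstrassPOnLine L h d 0 + weierstrassPOnLine L h d 1) := by linarith
  simpa using EllK_eq_of_deriv_sq_eq one_pos hlt hl.weierstrassPOnLine_endpoints_lt.2
    (hl.continuousOn_weierstrassPOnLine _)
    (fun t _ ↦ hl.hasDerivAt_weierstrassPOnLine t)
    (fun t ht ↦ hl.deriv_weierstrassPOnLine_ne_zero ht)
    (fun t _ ↦ hl.deriv_weierstrassPOnLine_sq t)

end IsRealHalfPeriodLine

end RealLine

section RectangularLattice

lemma hasSum_inv_pow_odd_half_periods (L : PeriodPair) {r : ℕ} (hr : 2 < r) :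
    HasSum (fun p : ℤ × ℤ ↦
        (((2 * p.1 + 1 : ℤ) * (L.ω₁ / 2) + (2 * p.2 + 1 : ℤ) * (L.ω₂ / 2)) ^ r)⁻¹)
      (L.sumInvPow (L.ω₁ / 2 + L.ω₂ / 2) r) := by
  let e := (Equiv.addRight (1 : ℤ)).prodCongr (Equiv.addRight (1 : ℤ)) |>.trans
    L.latticeEquivProd.symm.toEquiv
  refine (e.hasSum_iff.mpr (L.hasSum_sumInvPow _ hr)).congr_fun fun p ↦ ?_
  have he : (e p : ℂ) = (p.1 + 1 : ℤ) * L.ω₁ + (p.2 + 1 : ℤ) * L.ω₂ :=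
    L.latticeEquiv_symm_apply _
  rw [Function.comp_apply, he]
  push_cast
  ring

lemma isHalfPeriodPair_div_two (L : PeriodPair) : IsHalfPeriodPair L (L.ω₁ / 2) (L.ω₂ / 2) where
  two_mul_left_mem := by simpa [mul_div_cancel₀] using L.ω₁_mem_lattice
  two_mul_right_mem := by simpa [mul_div_cancel₀] using L.ω₂_mem_lattice
  left_notMem := L.ω₁_div_two_notMem_lattice
  right_notMem := L.ω₂_div_two_notMem_lattice
  add_notMem h := by
    have hmem := L.mul_ω₁_add_mul_ω₂_mem_lattice (α := 1 / 2) (β := 1 / 2)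
    have : L.ω₁ / 2 + L.ω₂ / 2 = (1 / 2 : ℚ) * L.ω₁ + (1 / 2 : ℚ) * L.ω₂ := by push_cast; ring
    rw [this, hmem] at h
    norm_num at h

lemma weierstrassP_conj {L : PeriodPair} (hL : ∀ l ∈ L.lattice, conj l ∈ L.lattice) (z : ℂ) :
    ℘[L] (conj z) = conj (℘[L] z) := by
  let σ : L.lattice ≃ L.lattice :=
    ⟨fun l ↦ ⟨_, hL l l.2⟩, fun l ↦ ⟨_, hL l l.2⟩, fun l ↦ by simp, fun l ↦ by simp⟩
  rw [PeriodPair.weierstrassP, PeriodPair.weierstrassP, Complex.conj_tsum, ← σ.tsum_eq]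
  simp [σ]

lemma im_weierstrassP_eq_zero {L : PeriodPair} (hL : ∀ l ∈ L.lattice, conj l ∈ L.lattice) {z : ℂ}
    (h : conj z - z ∈ L.lattice ∨ conj z + z ∈ L.lattice) : (℘[L] z).im = 0 := by
  rw [← Complex.conj_eq_iff_im, ← weierstrassP_conj hL]
  rcases h with h | h
  · simpa using L.weierstrassP_add_coe z ⟨_, h⟩
  · simpa using L.weierstrassP_add_coe (-z) ⟨_, h⟩

/-- The period pair `2, 2 i y` of a rectangular lattice. -/
noncomputable def rectPeriodPair (y : ℝ) (hy : 0 < y) : PeriodPair where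
  ω₁ := 2
  ω₂ := 2 * (y * I)
  indep := by
    refine LinearIndependent.pair_iff.mpr fun s t h ↦ ?_
    have hs : s = 0 := by simpa using congrArg Complex.re h
    have ht : t = 0 ∨ y = 0 := by simpa using congrArg Complex.im h
    exact ⟨hs, ht.resolve_right hy.ne'⟩

variable {y : ℝ} (hy : 0 < y) {z : ℂ}

lemma mem_lattice_rectPeriodPair :
    z ∈ (rectPeriodPair y hy).lattice ↔ ∃ m n : ℤ, z.re = 2 * m ∧ z.im = 2 * n * y := by
  rw [PeriodPair.mem_lattice]
  refine exists_congr fun m ↦ exists_congr fun n ↦ ?_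
  simp [rectPeriodPair, Complex.ext_iff, mul_comm, mul_assoc, eq_comm, mul_left_comm]

lemma notMem_lattice_rectPeriodPair_of_re (hre : z.re ∈ Ioo 0 2) :
    z ∉ (rectPeriodPair y hy).lattice := by
  rw [mem_lattice_rectPeriodPair]
  rintro ⟨m, n, hm, -⟩
  obtain ⟨h0, h2⟩ := hm ▸ hre
  have h0' : (0 : ℝ) < m := by linarith
  have h2' : (m : ℝ) < 1 := by linarith
  norm_cast at h0' h2'
  lia

lemma notMem_lattice_rectPeriodPair_of_im (him : z.im ∈ Ioo 0 (2 * y)) :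
    z ∉ (rectPeriodPair y hy).lattice := by
  rw [mem_lattice_rectPeriodPair]
  rintro ⟨m, n, -, hn⟩
  obtain ⟨h0, h2⟩ := hn ▸ him
  have h0' : (0 : ℝ) < n := by linarith [pos_of_mul_pos_left h0 hy.le]
  have h2' : (n : ℝ) < 1 := by linarith [lt_of_mul_lt_mul_right h2 hy.le]
  norm_cast at h0' h2'
  lia

lemma conj_mem_lattice_rectPeriodPair (hz : z ∈ (rectPeriodPair y hy).lattice) :
    conj z ∈ (rectPeriodPair y hy).lattice := by
  rw [mem_lattice_rectPeriodPair] at hz ⊢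
  obtain ⟨m, n, hre, him⟩ := hz
  exact ⟨m, -n, by simpa using hre, by simp [him]⟩

lemma isHalfPeriodPair_rectPeriodPair : IsHalfPeriodPair (rectPeriodPair y hy) 1 (y * I) := by
  simpa [rectPeriodPair] using isHalfPeriodPair_div_two (rectPeriodPair y hy)

lemma isRealHalfPeriodLine_horizontal :
    IsRealHalfPeriodLine (rectPeriodPair y hy) (y * I) 1 where
  toIsHalfPeriodPair := isHalfPeriodPair_rectPeriodPair hy
  notMem t := notMem_lattice_rectPeriodPair_of_im hy
    ⟨by simpa, by simpa using lt_mul_of_one_lt_left hy one_lt_two⟩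
  two_mul_notMem t ht := notMem_lattice_rectPeriodPair_of_re hy
    ⟨by simpa using ht.1, by simpa using ht.2⟩
  im_eq_zero t := by
    rw [one_pow, one_mul]
    refine im_weierstrassP_eq_zero (fun _ ↦ conj_mem_lattice_rectPeriodPair hy)
      (.inl ((mem_lattice_rectPeriodPair hy).mpr ⟨0, -1, by simp, ?_⟩))
    have him : (y * I + t * (1 : ℝ) : ℂ).im = y := by simp
    rw [Complex.sub_im, Complex.conj_im]
    push_cast at him ⊢
    linear_combination -2 * him

lemma isRealHalfPeriodLine_vertical :
    IsRealHalfPeriodLine (rectPeriodPair y hy) 1 (y * I) where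
  toIsHalfPeriodPair := (isHalfPeriodPair_rectPeriodPair hy).symm
  notMem t := notMem_lattice_rectPeriodPair_of_re hy ⟨by simp, by simp⟩
  two_mul_notMem t ht := notMem_lattice_rectPeriodPair_of_im hy
    ⟨by simpa [hy] using ht.1, by simpa [hy] using ht.2⟩
  im_eq_zero t := by
    have him : (℘[rectPeriodPair y hy] (1 + t * (y * I))).im = 0 :=
      im_weierstrassP_eq_zero (fun _ ↦ conj_mem_lattice_rectPeriodPair hy)
        (.inr ((mem_lattice_rectPeriodPair hy).mpr ⟨1, 0, by norm_num, by simp⟩))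
    rw [mul_pow, Complex.I_sq, mul_neg_one, ← Complex.ofReal_pow, ← Complex.ofReal_neg,
      Complex.im_ofReal_mul, him, mul_zero]

lemma exists_half_period_values_rectPeriodPair :
    ∃ e₁ e₂ e₃ : ℝ, ℘[rectPeriodPair y hy] 1 = e₁ ∧ ℘[rectPeriodPair y hy] (y * I) = e₂ ∧
      ℘[rectPeriodPair y hy] (1 + y * I) = e₃ ∧ e₁ + e₂ + e₃ = 0 ∧ e₂ < e₃ ∧ e₃ < e₁ ∧
      EllK √((e₃ - e₂) / (e₁ - e₂)) = √(e₁ - e₂) ∧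
      EllK √((e₁ - e₃) / (e₁ - e₂)) = y * √(e₁ - e₂) := by
  have hH := isRealHalfPeriodLine_horizontal hy
  have hV := isRealHalfPeriodLine_vertical hy
  obtain ⟨e₂, h₂⟩ : ∃ e₂, weierstrassPOnLine (rectPeriodPair y hy) (y * I) 1 0 = e₂ := ⟨_, rfl⟩
  obtain ⟨e₃, h₃⟩ : ∃ e₃, weierstrassPOnLine (rectPeriodPair y hy) (y * I) 1 1 = e₃ := ⟨_, rfl⟩
  obtain ⟨e₁, h₁⟩ : ∃ e₁, -(e₂ + e₃) = e₁ := ⟨_, rfl⟩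
  have hP₁ : ℘[rectPeriodPair y hy] 1 = e₁ := by
    simpa only [h₁, h₂, h₃, one_pow, one_mul] using hH.sq_mul_weierstrassP_eq
  have hP₂ : ℘[rectPeriodPair y hy] (y * I) = e₂ := by
    simpa only [h₂, one_pow, one_mul] using hH.ofReal_weierstrassPOnLine_zero.symm
  have hP₃ : ℘[rectPeriodPair y hy] (1 + y * I) = e₃ := by
    simpa only [h₃, one_pow, one_mul] using hH.ofReal_weierstrassPOnLine_one.symm
  have hV₀ : weierstrassPOnLine (rectPeriodPair y hy) 1 (y * I) 0 = y ^ 2 * -e₁ :=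
    Complex.ofReal_injective <| by
      simp [hV.ofReal_weierstrassPOnLine_zero, hP₁, mul_pow]
  have hV₁ : weierstrassPOnLine (rectPeriodPair y hy) 1 (y * I) 1 = y ^ 2 * -e₃ :=
    Complex.ofReal_injective <| by
      simp [hV.ofReal_weierstrassPOnLine_one, add_comm _ (1 : ℂ), hP₃, mul_pow]
  have hy2 : 0 < y ^ 2 := pow_pos hy 2
  have hsum : e₁ + e₂ + e₃ = 0 := by linarith
  have h31 : e₃ < e₁ := by simpa only [h₁, h₂, h₃] using hH.weierstrassPOnLine_endpoints_lt.2
  have h23 : e₂ < e₃ := by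
    have hlt := hV.weierstrassPOnLine_endpoints_lt.2
    rw [hV₀, hV₁, ← mul_add, ← mul_neg, mul_lt_mul_iff_right₀ hy2] at hlt
    linarith
  refine ⟨e₁, e₂, e₃, hP₁, hP₂, hP₃, hsum, h23, h31, hH.EllK_eq_sqrt h₂ h₃ hsum h23, ?_⟩
  have hK := hV.EllK_eq_sqrt (e₁ := y ^ 2 * -e₂) hV₀ hV₁ (by linear_combination -y ^ 2 * hsum)
    (by gcongr)
  rwa [← mul_sub, ← mul_sub, mul_div_mul_left _ _ hy2.ne', neg_sub_neg, neg_sub_neg,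
    Real.sqrt_mul hy2.le, Real.sqrt_sq hy.le] at hK

lemma hasSum_odd_inv_pow_six {e₁ e₂ e₃ : ℝ} (h₁ : ℘[rectPeriodPair y hy] 1 = e₁)
    (h₂ : ℘[rectPeriodPair y hy] (y * I) = e₂) (h₃ : ℘[rectPeriodPair y hy] (1 + y * I) = e₃) :
    HasSum (fun p : ℤ × ℤ ↦ (((2 * p.1 + 1 : ℤ) + (2 * p.2 + 1 : ℤ) * (y * I) : ℂ) ^ 6)⁻¹)
      (e₃ * (e₃ - e₁) * (e₃ - e₂) / 5 : ℝ) := by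
  have hsix := (isHalfPeriodPair_rectPeriodPair hy).five_mul_sumInvPow_add_six
  rw [h₁, h₂, h₃, mul_comm 5, ← eq_div_iff (by norm_num)] at hsix
  push_cast [← hsix]
  simpa [rectPeriodPair] using
    hasSum_inv_pow_odd_half_periods (rectPeriodPair y hy) (r := 6) (by norm_num)

lemma exists_EllK_complementary_eq_mul_and_hasSum {y : ℝ} (hy : 0 < y) :
    ∃ k ∈ Ioo (0 : ℝ) 1, EllK √(1 - k ^ 2) = y * EllK k ∧
      HasSum (fun p : ℤ × ℤ ↦ (((2 * p.1 + 1 : ℤ) + (2 * p.2 + 1 : ℤ) * (y * I) : ℂ) ^ 6)⁻¹)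
        (-(1 / 15) * (EllK k ^ 6 * (k ^ 2 * (1 - k ^ 2) * (2 * k ^ 2 - 1))) : ℝ) := by
  obtain ⟨e₁, e₂, e₃, h₁, h₂, h₃, hsum, h23, h31, hK, hK'⟩ :=
    exists_half_period_values_rectPeriodPair hy
  have h21 : 0 < e₁ - e₂ := by linarith
  have hk2 : √((e₃ - e₂) / (e₁ - e₂)) ^ 2 = (e₃ - e₂) / (e₁ - e₂) :=
    Real.sq_sqrt (div_pos (by linarith) h21).le
  refine ⟨√((e₃ - e₂) / (e₁ - e₂)), ⟨Real.sqrt_pos.mpr (div_pos (by linarith) h21), ?_⟩, ?_, ?_⟩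
  · rw [Real.sqrt_lt' one_pos, one_pow, div_lt_one h21]
    linarith
  · rw [hk2, hK, ← hK', one_sub_div h21.ne', sub_sub_sub_cancel_right]
  · have hK6 : √(e₁ - e₂) ^ 6 = (e₁ - e₂) ^ 3 := by
      rw [pow_mul (√(e₁ - e₂)) 2 3, Real.sq_sqrt h21.le]
    convert hasSum_odd_inv_pow_six hy h₁ h₂ h₃ using 2
    rw [hk2, hK, hK6]
    field_simp
    linear_combination -5 * (e₃ - e₂) * (e₃ - e₁) * hsum

end RectangularLattice

section LegendreRelation

lemma hasDerivAt_intervalIntegral_of_continuousOn {F F' : ℝ → ℝ → ℝ} {s : Set ℝ} {x₀ a b : ℝ}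
    (hs : s ∈ 𝓝 x₀) (hF : ∀ x ∈ s, ContinuousOn (F x) (uIcc a b))
    (hF' : ContinuousOn (Function.uncurry F') (s ×ˢ uIcc a b))
    (hderiv : ∀ x ∈ s, ∀ t ∈ uIcc a b, HasDerivAt (F · t) (F' x t) x) :
    HasDerivAt (fun x ↦ ∫ t in a..b, F x t) (∫ t in a..b, F' x₀ t) x₀ := by
  obtain ⟨K, hK, hKs, hKcompact⟩ := LocallyCompactSpace.local_compact_nhds x₀ s hs
  obtain ⟨C, hC⟩ := (hKcompact.prod isCompact_uIcc).exists_bound_of_continuousOn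
    (hF'.mono (prod_mono_left hKs))
  have hF'x₀ : ContinuousOn (F' x₀) (uIcc a b) :=
    hF'.comp (by fun_prop) fun t ht ↦ mk_mem_prod (mem_of_mem_nhds hs) ht
  refine (intervalIntegral.hasDerivAt_integral_of_dominated_loc_of_deriv_le (bound := fun _ ↦ C) hK
    ?_ (hF x₀ (mem_of_mem_nhds hs)).intervalIntegrable
    ((hF'x₀.mono uIoc_subset_uIcc).aestronglyMeasurable measurableSet_uIoc)
    (.of_forall fun t ht x hx ↦ hC (x, t) ⟨hx, uIoc_subset_uIcc ht⟩) (by simp)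
    (.of_forall fun t ht x hx ↦ hderiv x (hKs hx) t (uIoc_subset_uIcc ht))).2
  filter_upwards [hs] with x hx
  exact ((hF x hx).mono uIoc_subset_uIcc).aestronglyMeasurable measurableSet_uIoc

/-- The integral of `(1 - m sin² θ) ^ p` over `[0, π/2]`: the complete elliptic integrals of the
first and second kind, in terms of the parameter `m = k²`, are the cases `p = -1/2` and
`p = 1/2`. -/
noncomputable def ellInt (p m : ℝ) : ℝ :=
  ∫ θ in (0 : ℝ)..(π / 2), (1 - m * Real.sin θ ^ 2) ^ p

variable {p m : ℝ}

lemma ellInt_zero (p : ℝ) : ellInt p 0 = π / 2 := by simp [ellInt]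

lemma one_sub_le_one_sub_mul_sin_sq (hm : 0 ≤ m) (θ : ℝ) : 1 - m ≤ 1 - m * Real.sin θ ^ 2 :=
  sub_le_sub_left (mul_le_of_le_one_right hm (Real.sin_sq_le_one θ)) 1

lemma one_sub_mul_sin_sq_pos (hm : m < 1) (θ : ℝ) : 0 < 1 - m * Real.sin θ ^ 2 := by
  rcases le_total 0 m with h | h
  · linarith [one_sub_le_one_sub_mul_sin_sq h θ]
  · linarith [mul_nonpos_of_nonpos_of_nonneg h (sq_nonneg (Real.sin θ))]

lemma continuous_one_sub_mul_sin_sq_rpow (p : ℝ) (hm : m < 1) :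
    Continuous fun θ ↦ (1 - m * Real.sin θ ^ 2) ^ p :=
  Continuous.rpow_const (by fun_prop) fun θ ↦ .inl (one_sub_mul_sin_sq_pos hm θ).ne'

lemma hasDerivAt_ellInt (p : ℝ) (hm : m < 1) :
    HasDerivAt (ellInt p) (∫ θ in (0 : ℝ)..(π / 2),
      -Real.sin θ ^ 2 * p * (1 - m * Real.sin θ ^ 2) ^ (p - 1)) m := by
  refine hasDerivAt_intervalIntegral_of_continuousOn (F := fun m θ ↦ (1 - m * Real.sin θ ^ 2) ^ p)
    (F' := fun m θ ↦ -Real.sin θ ^ 2 * p * (1 - m * Real.sin θ ^ 2) ^ (p - 1))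
    (Iio_mem_nhds hm) (fun x hx ↦ (continuous_one_sub_mul_sin_sq_rpow p hx).continuousOn) ?_
    fun x hx θ _ ↦ ?_
  · exact ContinuousOn.mul (by fun_prop) (ContinuousOn.rpow_const (by fun_prop)
      fun x hx ↦ .inl (one_sub_mul_sin_sq_pos hx.1 x.2).ne')
  · have hlinear : HasDerivAt (fun x ↦ 1 - x * Real.sin θ ^ 2) (-Real.sin θ ^ 2) x := by
      simpa using ((hasDerivAt_id x).mul_const (Real.sin θ ^ 2)).const_sub 1
    exact hlinear.rpow_const (.inl (one_sub_mul_sin_sq_pos hx θ).ne')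

lemma hasDerivAt_ellInt_of_ne_zero (p : ℝ) (h0 : m ≠ 0) (hm : m < 1) :
    HasDerivAt (ellInt p) (p * (ellInt p m - ellInt (p - 1) m) / m) m := by
  have hint (q : ℝ) : IntervalIntegrable (fun θ ↦ (1 - m * Real.sin θ ^ 2) ^ q) volume 0 (π / 2) :=
    (continuous_one_sub_mul_sin_sq_rpow q hm).intervalIntegrable _ _
  refine (hasDerivAt_ellInt p hm).congr_deriv ?_
  rw [eq_div_iff h0, mul_comm _ m, ← intervalIntegral.integral_const_mul, ellInt, ellInt,
    ← intervalIntegral.integral_sub (hint p) (hint (p - 1)), ← intervalIntegral.integral_const_mul]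
  refine intervalIntegral.integral_congr fun θ _ ↦ ?_
  have hpow := Real.rpow_add_one (one_sub_mul_sin_sq_pos hm θ).ne' (p - 1)
  rw [sub_add_cancel] at hpow
  simp only [hpow]
  ring

lemma hasDerivAt_sin_mul_cos_mul_rpow (hm : m < 1) (θ : ℝ) :
    HasDerivAt (fun θ ↦ m * (Real.sin θ * Real.cos θ) * (1 - m * Real.sin θ ^ 2) ^ (-1 / 2 : ℝ))
      ((1 - m * Real.sin θ ^ 2) ^ (1 / 2 : ℝ) -
        (1 - m) * (1 - m * Real.sin θ ^ 2) ^ (-1 / 2 - 1 : ℝ)) θ := by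
  have hpos := one_sub_mul_sin_sq_pos hm θ
  have hbase : HasDerivAt (fun θ ↦ 1 - m * Real.sin θ ^ 2)
      (-(m * (2 * Real.sin θ * Real.cos θ))) θ := by
    simpa using (((Real.hasDerivAt_sin θ).fun_pow 2).const_mul m).const_sub 1
  refine (((Real.hasDerivAt_sin θ).fun_mul (Real.hasDerivAt_cos θ)).const_mul m).fun_mul
    (hbase.rpow_const (p := -1 / 2) (.inl hpos.ne')) |>.congr_deriv ?_
  have hneg_half : (1 - m * Real.sin θ ^ 2) ^ (-1 / 2 : ℝ) =
      (1 - m * Real.sin θ ^ 2) ^ (-1 / 2 - 1 : ℝ) * (1 - m * Real.sin θ ^ 2) := by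
    rw [← Real.rpow_add_one hpos.ne', sub_add_cancel]
  have hhalf : (1 - m * Real.sin θ ^ 2) ^ (1 / 2 : ℝ) =
      (1 - m * Real.sin θ ^ 2) ^ (-1 / 2 - 1 : ℝ) * (1 - m * Real.sin θ ^ 2) ^ 2 := by
    rw [← Real.rpow_add_natCast hpos.ne']
    norm_num
  rw [hneg_half, hhalf]
  linear_combination m * (1 - m * Real.sin θ ^ 2) ^ (-1 / 2 - 1 : ℝ) * Real.sin_sq_add_cos_sq θ

lemma one_sub_mul_ellInt_neg_three_halves (hm : m < 1) :
    (1 - m) * ellInt (-1 / 2 - 1) m = ellInt (1 / 2) m := by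
  have hhalf := (continuous_one_sub_mul_sin_sq_rpow (1 / 2) hm).intervalIntegrable
    (μ := volume) 0 (π / 2)
  have hneg := ((continuous_one_sub_mul_sin_sq_rpow (-1 / 2 - 1) hm).const_mul
    (1 - m)).intervalIntegrable (μ := volume) 0 (π / 2)
  have hftc := intervalIntegral.integral_eq_sub_of_hasDerivAt
    (fun θ _ ↦ hasDerivAt_sin_mul_cos_mul_rpow hm θ) (hhalf.sub hneg)
  rw [intervalIntegral.integral_sub hhalf hneg, intervalIntegral.integral_const_mul,
    Real.cos_pi_div_two, Real.sin_zero] at hftc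
  simp only [mul_zero, zero_mul, sub_zero] at hftc
  exact (sub_eq_zero.mp hftc).symm

lemma hasDerivAt_ellInt_half (h0 : m ≠ 0) (hm : m < 1) :
    HasDerivAt (ellInt (1 / 2)) ((ellInt (1 / 2) m - ellInt (-1 / 2) m) / (2 * m)) m := by
  refine (hasDerivAt_ellInt_of_ne_zero (1 / 2) h0 hm).congr_deriv ?_
  rw [show (1 / 2 - 1 : ℝ) = -1 / 2 by norm_num]
  field_simp

lemma hasDerivAt_ellInt_neg_half (h0 : m ≠ 0) (hm : m < 1) :
    HasDerivAt (ellInt (-1 / 2))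
      ((ellInt (1 / 2) m / (1 - m) - ellInt (-1 / 2) m) / (2 * m)) m := by
  refine (hasDerivAt_ellInt_of_ne_zero (-1 / 2) h0 hm).congr_deriv ?_
  rw [← one_sub_mul_ellInt_neg_three_halves hm, mul_div_cancel_left₀ _ (sub_pos.mpr hm).ne']
  field_simp
  ring

lemma norm_ellInt_one_sub_le (hp : p ≤ 0) (h0 : 0 < m) (h1 : m ≤ 1) :
    ‖ellInt p (1 - m)‖ ≤ m ^ p * (π / 2) := by
  have hle : ∀ θ ∈ uIoc 0 (π / 2), ‖(1 - (1 - m) * Real.sin θ ^ 2) ^ p‖ ≤ m ^ p := fun θ _ ↦ by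
    rw [Real.norm_of_nonneg
      (Real.rpow_nonneg (one_sub_mul_sin_sq_pos (sub_lt_self 1 h0) θ).le _)]
    exact Real.rpow_le_rpow_of_nonpos h0
      (by simpa using one_sub_le_one_sub_mul_sin_sq (sub_nonneg.mpr h1) θ) hp
  simpa [ellInt, abs_of_pos Real.pi_div_two_pos] using
    intervalIntegral.norm_integral_le_of_norm_le_const hle

lemma ellInt_half_one : ellInt (1 / 2) 1 = 1 := by
  rw [ellInt, intervalIntegral.integral_congr (g := Real.cos)]
  · simp
  · intro θ hθ
    rw [uIcc_of_le (by positivity)] at hθ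
    simp only
    rw [one_mul, ← Real.cos_sq', ← Real.sqrt_eq_rpow, Real.sqrt_sq]
    exact Real.cos_nonneg_of_mem_Icc ⟨by linarith [hθ.1, Real.pi_pos], hθ.2⟩

lemma continuous_ellInt (hp : 0 ≤ p) : Continuous (ellInt p) :=
  intervalIntegral.continuous_parametric_intervalIntegral_of_continuous'
    (f := fun m θ ↦ (1 - m * Real.sin θ ^ 2) ^ p)
    (Continuous.rpow_const (by fun_prop) fun _ ↦ .inr hp) _ _

/-- The combination `E K' + E' K - K K'` of complete elliptic integrals that Legendre's relation
evaluates, as a function of the parameter `m = k²`. -/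
noncomputable def legendreExpr (m : ℝ) : ℝ :=
  ellInt (1 / 2) m * ellInt (-1 / 2) (1 - m) + ellInt (1 / 2) (1 - m) * ellInt (-1 / 2) m -
    ellInt (-1 / 2) m * ellInt (-1 / 2) (1 - m)

lemma hasDerivAt_legendreExpr (hm : m ∈ Ioo 0 1) : HasDerivAt legendreExpr 0 m := by
  have hm₀ : m ≠ 0 := hm.1.ne'
  have hm₁ : 1 - m ≠ 0 := (sub_pos.mpr hm.2).ne'
  have hsub : HasDerivAt (fun x : ℝ ↦ 1 - x) (-1) m := (hasDerivAt_id m).const_sub 1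
  have hlt : 1 - m < 1 := sub_lt_self 1 hm.1
  have hE := hasDerivAt_ellInt_half hm₀ hm.2
  have hK := hasDerivAt_ellInt_neg_half hm₀ hm.2
  have hE' := (hasDerivAt_ellInt_half hm₁ hlt).comp m hsub
  have hK' := (hasDerivAt_ellInt_neg_half hm₁ hlt).comp m hsub
  refine (((hE.mul hK').add (hE'.mul hK)).sub (hK.mul hK')).congr_deriv ?_
  simp only [Function.comp_apply, sub_sub_cancel]
  field_simp
  ring

/-- The term `(E - K) K'` tends to `0` because `E - K = O(m)`, whereas `K' = O(m ^ (-1/2))`. -/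
lemma tendsto_legendreExpr : Tendsto legendreExpr (𝓝[>] 0) (𝓝 (π / 2)) := by
  have hE := hasDerivAt_ellInt (1 / 2) one_pos
  have hK := hasDerivAt_ellInt (-1 / 2) one_pos
  have hslope := (hE.sub hK).tendsto_slope_zero_right
  simp only [zero_add, Pi.sub_apply, ellInt_zero, sub_self, sub_zero, smul_eq_mul] at hslope
  have hIoo : Ioo (0 : ℝ) 1 ∈ 𝓝[>] (0 : ℝ) := Ioo_mem_nhdsGT one_pos
  have hmulK' : Tendsto (fun x ↦ x * ellInt (-1 / 2) (1 - x)) (𝓝[>] 0) (𝓝 0) := by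
    have hbound : Tendsto (fun x : ℝ ↦ x ^ (1 / 2 : ℝ) * (π / 2)) (𝓝[>] 0) (𝓝 0) := by
      have hcont := (Real.continuous_rpow_const (q := 1 / 2) (by norm_num)).mul_const (π / 2)
      simpa using (hcont.tendsto 0).mono_left nhdsWithin_le_nhds
    refine squeeze_zero_norm' ?_ hbound
    filter_upwards [hIoo] with x hx
    have hpow : x ^ (1 / 2 : ℝ) = x * x ^ (-1 / 2 : ℝ) := by
      rw [mul_comm, ← Real.rpow_add_one hx.1.ne']
      norm_num
    rw [norm_mul, Real.norm_of_nonneg hx.1.le, hpow, mul_assoc]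
    exact mul_le_mul_of_nonneg_left (norm_ellInt_one_sub_le (by norm_num) hx.1 hx.2.le) hx.1.le
  have hE' : Tendsto (fun x ↦ ellInt (1 / 2) (1 - x)) (𝓝[>] 0) (𝓝 1) := by
    have hcont : Continuous fun x ↦ ellInt (1 / 2) (1 - x) :=
      (continuous_ellInt (by norm_num)).comp (continuous_sub_left 1)
    exact (hcont.tendsto' 0 1 (by rw [sub_zero, ellInt_half_one])).mono_left nhdsWithin_le_nhds
  have hK₀ : Tendsto (ellInt (-1 / 2)) (𝓝[>] 0) (𝓝 (π / 2)) :=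
    ellInt_zero (-1 / 2) ▸ hK.continuousAt.tendsto.mono_left nhdsWithin_le_nhds
  have hlim := (hslope.mul hmulK').add (hE'.mul hK₀)
  rw [mul_zero, zero_add, one_mul] at hlim
  refine hlim.congr' ?_
  filter_upwards [hIoo] with x hx
  rw [mul_mul_mul_comm, inv_mul_cancel₀ hx.1.ne', one_mul, legendreExpr]
  ring

lemma legendreExpr_eq_pi_div_two (hm : m ∈ Ioo 0 1) : legendreExpr m = π / 2 := by
  have hconst : ∀ x ∈ Ioo (0 : ℝ) 1, legendreExpr x = legendreExpr m := fun x hx ↦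
    isOpen_Ioo.is_const_of_deriv_eq_zero isPreconnected_Ioo
      (fun z hz ↦ (hasDerivAt_legendreExpr hz).differentiableAt.differentiableWithinAt)
      (fun z hz ↦ (hasDerivAt_legendreExpr hz).deriv) hx hm
  refine tendsto_nhds_unique (tendsto_const_nhds.congr' ?_) tendsto_legendreExpr
  filter_upwards [Ioo_mem_nhdsGT one_pos] with x hx using (hconst x hx).symm

end LegendreRelation

section EllK

variable {k : ℝ}

lemma sq_lt_one_of_mem_Ico (hk : k ∈ Ico 0 1) : k ^ 2 < 1 := by nlinarith [hk.1, hk.2]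

lemma sqrt_one_sub_sq_mem_Ioo (hk : k ∈ Ioo 0 1) : √(1 - k ^ 2) ∈ Ioo 0 1 := by
  rw [mem_Ioo, Real.sqrt_pos, Real.sqrt_lt' one_pos]
  constructor <;> nlinarith [hk.1, hk.2]

lemma EllK_eq_ellInt (hk : k ∈ Ico 0 1) : EllK k = ellInt (-1 / 2) (k ^ 2) := by
  rw [EllK_eq_integral_comp (a := 0) (b := π / 2) (s := Real.sin) k (by positivity)
    Real.continuous_sin.continuousOn (fun t _ ↦ Real.hasDerivAt_sin t)
    (fun t ht ↦ Real.cos_nonneg_of_mem_Icc ⟨by linarith [ht.1, Real.pi_pos], ht.2.le⟩)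
    Real.sin_zero Real.sin_pi_div_two, ellInt, intervalIntegral.integral_of_le (by positivity),
    integral_Ioc_eq_integral_Ioo]
  refine setIntegral_congr_fun measurableSet_Ioo fun t ht ↦ ?_
  have hcos : 0 < Real.cos t := Real.cos_pos_of_mem_Ioo ⟨by linarith [ht.1, Real.pi_pos], ht.2⟩
  have hpos := one_sub_mul_sin_sq_pos (sq_lt_one_of_mem_Ico hk) t
  rw [← Real.cos_sq', Real.sqrt_mul (sq_nonneg _), Real.sqrt_sq hcos.le, neg_div,
    Real.rpow_neg hpos.le, ← Real.sqrt_eq_rpow, div_mul_cancel_left₀ hcos.ne']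

lemma EllK_sqrt_one_sub_sq_eq_ellInt (hk : k ∈ Ioo 0 1) :
    EllK √(1 - k ^ 2) = ellInt (-1 / 2) (1 - k ^ 2) := by
  rw [EllK_eq_ellInt (Ioo_subset_Ico_self (sqrt_one_sub_sq_mem_Ioo hk)),
    Real.sq_sqrt (sub_pos.mpr (sq_lt_one_of_mem_Ico (Ioo_subset_Ico_self hk))).le]

lemma EllK_pos (hk : k ∈ Ico 0 1) : 0 < EllK k := by
  have hk2 := sq_lt_one_of_mem_Ico hk
  rw [EllK_eq_ellInt hk]
  exact intervalIntegral.intervalIntegral_pos_of_pos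
    ((continuous_one_sub_mul_sin_sq_rpow _ hk2).intervalIntegrable _ _)
    (fun θ ↦ Real.rpow_pos_of_pos (one_sub_mul_sin_sq_pos hk2 θ) _) (by positivity)

/-- The ratio `K' / K` of the complete elliptic integrals of the complementary modulus `√(1 - k²)`
and of the modulus `k`. -/
noncomputable def periodRatio (k : ℝ) : ℝ := EllK √(1 - k ^ 2) / EllK k

lemma hasDerivAt_periodRatio (hk : k ∈ Ioo 0 1) :
    HasDerivAt periodRatio (-(π / (2 * (k * (1 - k ^ 2) * EllK k ^ 2)))) k := by
  have hm : k ^ 2 ∈ Ioo 0 1 :=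
    ⟨pow_pos hk.1 2, sq_lt_one_of_mem_Ico (Ioo_subset_Ico_self hk)⟩
  have hm₁ : 0 < 1 - k ^ 2 := sub_pos.mpr hm.2
  have hsq : HasDerivAt (fun k : ℝ ↦ k ^ 2) (2 * k) k := by simpa using hasDerivAt_pow 2 k
  have hK := HasDerivAt.comp (h := (· ^ 2)) k (hasDerivAt_ellInt_neg_half hm.1.ne' hm.2) hsq
  have hK' := (hasDerivAt_ellInt_neg_half hm₁.ne' (sub_lt_self 1 hm.1)).comp k (hsq.const_sub 1)
  have hEllK := EllK_pos (Ioo_subset_Ico_self hk)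
  rw [EllK_eq_ellInt (Ioo_subset_Ico_self hk)] at hEllK ⊢
  refine ((hK'.div hK hEllK.ne').congr_of_eventuallyEq ?_).congr_deriv ?_
  · filter_upwards [Ioo_mem_nhds hk.1 hk.2] with x hx
    rw [periodRatio, EllK_sqrt_one_sub_sq_eq_ellInt hx, EllK_eq_ellInt (Ioo_subset_Ico_self hx)]
    rfl
  · have hlegendre := legendreExpr_eq_pi_div_two hm
    have hk₀ := hk.1
    rw [legendreExpr] at hlegendre
    simp only [Function.comp_apply, sub_sub_cancel]
    generalize ellInt (-1 / 2) (k ^ 2) = K, ellInt (-1 / 2) (1 - k ^ 2) = K' at hEllK hlegendre ⊢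
    field_simp
    linear_combination -2 * hlegendre

end EllK

section MidpointRule

variable {E : Type*} [NormedAddCommGroup E] [NormedSpace ℝ E] {Ψ φ : ℝ → E} {g : ℝ → ℝ}

lemma norm_sub_le_sub_of_norm_deriv_le {f f' : ℝ → E} {B B' : ℝ → ℝ}
    (hf : ∀ x, HasDerivAt f (f' x) x) (hB : ∀ x, HasDerivAt B (B' x) x)
    (hle : ∀ x, ‖f' x‖ ≤ B' x) {x y : ℝ} (hxy : x ≤ y) : ‖f y - f x‖ ≤ B y - B x :=
  image_norm_le_of_norm_deriv_right_le_deriv_boundary (f := fun t ↦ f t - f x)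
    (B := fun t ↦ B t - B x) (fun t _ ↦ ((hf t).sub_const _).continuousAt.continuousWithinAt)
    (fun t _ ↦ ((hf t).sub_const _).hasDerivWithinAt) (by simp) (fun t ↦ (hB t).sub_const _)
    (fun t _ ↦ hle t) (right_mem_Icc.mpr hxy)

lemma norm_sub_sub_smul_le_of_hasDerivAt (hΨ : ∀ x, HasDerivAt Ψ (φ x) x)
    (hφ : ∀ x y, x ≤ y → ‖φ y - φ x‖ ≤ g y - g x) {u c v : ℝ} (huc : u ≤ c) (hcv : c ≤ v) :
    ‖Ψ v - Ψ u - (v - u) • φ c‖ ≤ (v - u) * (g v - g u) := by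
  have hg : Monotone g := fun x y h ↦ sub_nonneg.mp ((norm_nonneg _).trans (hφ x y h))
  have hderiv : ∀ x ∈ Icc u v,
      HasDerivWithinAt (fun x ↦ Ψ x - x • φ c) (φ x - φ c) (Icc u v) x := fun x _ ↦ by
    simpa using ((hΨ x).fun_sub ((hasDerivAt_id x).smul_const (φ c))).hasDerivWithinAt
  have hbound : ∀ x ∈ Icc u v, ‖φ x - φ c‖ ≤ g v - g u := fun x hx ↦ by
    rcases le_total c x with h | h
    · linarith [hφ c x h, hg hx.2, hg huc]
    · rw [norm_sub_rev]
      linarith [hφ x c h, hg hx.1, hg hcv]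
  have huv := huc.trans hcv
  calc ‖Ψ v - Ψ u - (v - u) • φ c‖ = ‖Ψ v - v • φ c - (Ψ u - u • φ c)‖ := by
        rw [sub_smul]
        congr 1
        abel
    _ ≤ (g v - g u) * ‖v - u‖ := (convex_Icc u v).norm_image_sub_le_of_norm_hasDerivWithin_le
        hderiv hbound (left_mem_Icc.mpr huv) (right_mem_Icc.mpr huv)
    _ = (v - u) * (g v - g u) := by rw [Real.norm_of_nonneg (sub_nonneg.mpr huv), mul_comm]

lemma norm_smul_tsum_midpoint_sub_le (hΨ : ∀ x, HasDerivAt Ψ (φ x) x)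
    (hφ : ∀ x y, x ≤ y → ‖φ y - φ x‖ ≤ g y - g x) {B δ : ℝ} {l : E} (hB : ∀ x, g x - g 0 ≤ B)
    (hl : Tendsto Ψ atTop (𝓝 l)) (hδ : 0 < δ)
    (hsum : Summable fun n : ℕ ↦ φ ((2 * n + 1) * δ)) :
    ‖(2 * δ) • (∑' n : ℕ, φ ((2 * n + 1) * δ)) - (l - Ψ 0)‖ ≤ 2 * δ * B := by
  have hpartial (N : ℕ) : ‖(2 * δ) • (∑ n ∈ Finset.range N, φ ((2 * n + 1) * δ)) -
      (Ψ (2 * N * δ) - Ψ 0)‖ ≤ 2 * δ * (g (2 * N * δ) - g 0) := by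
    induction N with
    | zero => simp
    | succ N ih =>
      have hstep := norm_sub_sub_smul_le_of_hasDerivAt hΨ hφ (u := 2 * N * δ)
        (c := (2 * N + 1) * δ) (v := 2 * (N + 1) * δ) (by nlinarith) (by nlinarith)
      rw [show 2 * (N + 1) * δ - 2 * N * δ = 2 * δ by ring] at hstep
      rw [Finset.sum_range_succ, Nat.cast_add_one, smul_add]
      calc _ ≤ _ := norm_sub_le_norm_sub_add_norm_sub _
            ((2 * δ) • φ ((2 * N + 1) * δ) + (Ψ (2 * N * δ) - Ψ 0)) _
        _ ≤ 2 * δ * (g (2 * N * δ) - g 0) +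
            2 * δ * (g (2 * (N + 1) * δ) - g (2 * N * δ)) := by
          refine add_le_add (le_of_eq_of_le ?_ ih) (le_of_eq_of_le ?_ hstep)
          · congr 1
            abel
          · rw [← norm_neg]
            congr 1
            abel
        _ = _ := by ring
  have hΨlim : Tendsto (fun N : ℕ ↦ Ψ (2 * N * δ)) atTop (𝓝 l) :=
    hl.comp (Tendsto.atTop_mul_const hδ (tendsto_natCast_atTop_atTop.const_mul_atTop two_pos))
  exact le_of_tendsto'
    ((hsum.hasSum.tendsto_sum_nat.const_smul (2 * δ)).sub (hΨlim.sub_const (Ψ 0))).norm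
    fun N ↦ (hpartial N).trans (mul_le_mul_of_nonneg_left (hB _) (by positivity))

end MidpointRule

section LatticeTerm

variable {k : ℕ} {a b c ε : ℝ}

/-- The term `(a + i c) ^ (-k)` of a lattice sum of weight `k`. -/
noncomputable def latticeTerm (k : ℕ) (a c : ℝ) : ℂ := (a + c * I)⁻¹ ^ k

lemma ofReal_add_mul_I_ne_zero (ha : a ≠ 0) (c : ℝ) : (a + c * I : ℂ) ≠ 0 := fun h ↦
  ha (by simpa using congrArg Complex.re h)

lemma latticeTerm_succ_mul (ha : a ≠ 0) (k : ℕ) (c : ℝ) :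
    latticeTerm (k + 1) a c * (a + c * I) = latticeTerm k a c := by
  rw [latticeTerm, pow_succ, inv_mul_cancel_right₀ (ofReal_add_mul_I_ne_zero ha c), latticeTerm]

lemma latticeTerm_eq_mul (ha : a ≠ 0) (k : ℕ) (c : ℝ) :
    latticeTerm k a c = ((a⁻¹ ^ k : ℝ) : ℂ) * latticeTerm k 1 (c / a) := by
  have : (a : ℂ) ≠ 0 := mod_cast ha
  rw [latticeTerm, latticeTerm, Complex.ofReal_pow, ← mul_pow, Complex.ofReal_inv, ← mul_inv]
  congr 2
  push_cast
  field_simp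

lemma re_latticeTerm_neg_left (hk : Even k) (a c : ℝ) :
    (latticeTerm k (-a) c).re = (latticeTerm k a c).re := by
  have hconj : ((-a : ℝ) + c * I : ℂ) = -conj (a + c * I : ℂ) := by simp [add_comm]
  rw [latticeTerm, latticeTerm, hconj, inv_neg, hk.neg_pow, ← map_inv₀, ← map_pow, Complex.conj_re]

lemma re_latticeTerm_neg_right (k : ℕ) (a c : ℝ) :
    (latticeTerm k a (-c)).re = (latticeTerm k a c).re := by
  have hconj : (a + (-c : ℝ) * I : ℂ) = conj (a + c * I : ℂ) := by simp
  rw [latticeTerm, latticeTerm, hconj, ← map_inv₀, ← map_pow, Complex.conj_re]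

lemma hasDerivAt_latticeTerm (ha : a ≠ 0) (k : ℕ) (c : ℝ) :
    HasDerivAt (latticeTerm k a) (-(k * I) * latticeTerm (k + 1) a c) c := by
  have hlinear : HasDerivAt (fun c : ℝ ↦ (a + c * I : ℂ)) I c := by
    simpa using ((Complex.ofRealCLM.hasDerivAt (x := c)).mul_const I).const_add (a : ℂ)
  refine ((hlinear.fun_inv (ofReal_add_mul_I_ne_zero ha c)).fun_pow k).congr_deriv ?_
  rcases k with _ | k
  · simp
  · rw [latticeTerm, add_tsub_cancel_right, neg_div, div_eq_mul_inv, ← inv_pow]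
    ring

lemma hasDerivAt_re_latticeTerm (ha : a ≠ 0) (k : ℕ) (c : ℝ) :
    HasDerivAt (fun c ↦ (latticeTerm k a c).re) (k * (latticeTerm (k + 1) a c).im) c :=
  (Complex.reCLM.hasFDerivAt.comp_hasDerivAt c (hasDerivAt_latticeTerm ha k c)).congr_deriv
    (by simp)

lemma hasDerivAt_im_latticeTerm (ha : a ≠ 0) (k : ℕ) (c : ℝ) :
    HasDerivAt (fun c ↦ (latticeTerm k a c).im) (-(k * (latticeTerm (k + 1) a c).re)) c :=
  (Complex.imCLM.hasFDerivAt.comp_hasDerivAt c (hasDerivAt_latticeTerm ha k c)).congr_deriv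
    (by simp)

lemma norm_latticeTerm (k : ℕ) (a c : ℝ) :
    ‖latticeTerm k a c‖ = (a ^ 2 + c ^ 2) ^ (-(k / 2) : ℝ) := by
  have hsq : a ^ 2 + c ^ 2 = ‖(a + c * I : ℂ)‖ ^ (2 : ℝ) := by
    rw [Real.rpow_two, ← Complex.normSq_eq_norm_sq, Complex.normSq_add_mul_I]
  rw [latticeTerm, norm_pow, norm_inv, hsq, ← Real.rpow_mul (norm_nonneg _), mul_neg,
    mul_div_cancel₀ _ two_ne_zero, Real.rpow_neg (norm_nonneg _), Real.rpow_natCast, inv_pow]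

lemma norm_latticeTerm_le (k : ℕ) (ha : 0 < a) (hc : 0 < c) :
    ‖latticeTerm k a c‖ ≤ (a * c) ^ (-(k / 2) : ℝ) := by
  rw [norm_latticeTerm]
  exact Real.rpow_le_rpow_of_nonpos (by positivity) (by nlinarith [sq_nonneg (a - c)])
    (by rw [neg_nonpos]; positivity)

lemma tendsto_latticeTerm_mul_atTop (hk : k ≠ 0) (ha : 0 < a) (hb : 0 < b) :
    Tendsto (fun y ↦ latticeTerm k a (b * y)) atTop (𝓝 0) := by
  have hlim : Tendsto (fun y ↦ (a * (b * y)) ^ (-(k / 2) : ℝ)) atTop (𝓝 0) :=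
    (tendsto_rpow_neg_atTop (by positivity)).comp
      ((tendsto_id.const_mul_atTop hb).const_mul_atTop ha)
  refine squeeze_zero_norm' ?_ hlim
  filter_upwards [eventually_gt_atTop 0] with y hy
  exact norm_latticeTerm_le k ha (mul_pos hb hy)

lemma norm_re_latticeTerm_mul_le (k : ℕ) (ha : 0 < a) (hb : 0 < b) {y : ℝ} (hy : 0 < y) :
    ‖(latticeTerm k a (b * y)).re‖ ≤
      a ^ (-(k / 2) : ℝ) * b ^ (-(k / 2) : ℝ) * y ^ (-(k / 2) : ℝ) := by
  refine (Complex.abs_re_le_norm _).trans ((norm_latticeTerm_le k ha (mul_pos hb hy)).trans_eq ?_)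
  rw [Real.mul_rpow ha.le (mul_pos hb hy).le, Real.mul_rpow hb.le hy.le, mul_assoc]

lemma integrableOn_Ioi_const_mul_rpow (hk : 2 < k) (hε : 0 < ε) (C : ℝ) :
    IntegrableOn (fun y : ℝ ↦ C * y ^ (-(k / 2) : ℝ)) (Ioi ε) := by
  have : (2 : ℝ) < k := mod_cast hk
  exact (integrableOn_Ioi_rpow_of_lt (by linarith) hε).const_mul C

lemma integrableOn_Ioi_re_latticeTerm (hk : 2 < k) (ha : 0 < a) (hb : 0 < b) (hε : 0 < ε) :
    IntegrableOn (fun y ↦ (latticeTerm k a (b * y)).re) (Ioi ε) := by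
  have hcont : Continuous fun c ↦ (latticeTerm k a c).re :=
    continuous_iff_continuousAt.mpr fun c ↦ (hasDerivAt_re_latticeTerm ha.ne' k c).continuousAt
  refine (integrableOn_Ioi_const_mul_rpow hk hε (a ^ (-(k / 2) : ℝ) * b ^ (-(k / 2) : ℝ))).mono'
    (hcont.comp (continuous_const_mul b)).aestronglyMeasurable ?_
  filter_upwards [ae_restrict_mem measurableSet_Ioi] with y hy
  exact norm_re_latticeTerm_mul_le k ha hb (hε.trans hy)

lemma integral_Ioi_re_latticeTerm (hk : 1 < k) (ha : 0 < a) (hb : 0 < b) (hε : 0 < ε) :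
    ∫ y in Ioi ε, (latticeTerm (k + 1) a (b * y)).re = (latticeTerm k a (b * ε)).im / (k * b) := by
  have hk₀ : k ≠ 0 := by lia
  have hderiv (y : ℝ) : HasDerivAt (fun y ↦ -(latticeTerm k a (b * y)).im / (k * b))
      (latticeTerm (k + 1) a (b * y)).re y := by
    refine ((hasDerivAt_im_latticeTerm ha.ne' k (b * y)).comp y
      ((hasDerivAt_id y).const_mul b)).fun_neg.div_const (k * b) |>.congr_deriv ?_
    field_simp
  have hlim := (Complex.continuous_im.tendsto 0).comp (tendsto_latticeTerm_mul_atTop hk₀ ha hb)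
  rw [integral_Ioi_of_hasDerivAt_of_tendsto' (fun y _ ↦ hderiv y)
    (integrableOn_Ioi_re_latticeTerm (by lia) ha hb hε) (hlim.neg.div_const _)]
  simp [neg_div]

end LatticeTerm

section OddQuadrantSum

variable {k : ℕ} {ε : ℝ}

/-- The continuous extension to `x = 0` of `-Im ((1 + i x) ^ (-k)) / x`. -/
noncomputable def sumReLatticeTerm (k : ℕ) (x : ℝ) : ℝ :=
  ∑ l ∈ Finset.range k, (latticeTerm (l + 1) 1 x).re

lemma mul_sumReLatticeTerm (k : ℕ) (x : ℝ) :
    x * sumReLatticeTerm k x = -(latticeTerm k 1 x).im := by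
  induction k with
  | zero => simp [sumReLatticeTerm, latticeTerm]
  | succ k ih =>
    have him := congrArg Complex.im (latticeTerm_succ_mul one_ne_zero k x)
    simp only [Complex.mul_im, Complex.add_re, Complex.add_im, Complex.ofReal_re,
      Complex.ofReal_im, Complex.re_ofReal_mul, Complex.I_re, Complex.I_im] at him
    rw [sumReLatticeTerm] at ih ⊢
    rw [Finset.sum_range_succ, mul_add, ih]
    linarith

lemma re_latticeTerm_one (x : ℝ) : (latticeTerm 1 1 x).re = 1 / (1 + x ^ 2) := by
  rw [latticeTerm, pow_one, Complex.inv_re, Complex.normSq_add_mul_I, one_pow]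
  simp

lemma hasDerivAt_arctan_sub_sum_im_latticeTerm (k : ℕ) (x : ℝ) :
    HasDerivAt
      (fun x ↦ Real.arctan x - ∑ l ∈ Finset.range k, (latticeTerm (l + 1) 1 x).im / (l + 1 : ℝ))
      (sumReLatticeTerm (k + 1) x) x := by
  refine ((Real.hasDerivAt_arctan x).fun_sub (HasDerivAt.fun_sum fun l _ ↦
    (hasDerivAt_im_latticeTerm one_ne_zero (l + 1) x).div_const (l + 1 : ℝ))).congr_deriv ?_
  have hterm (l : ℕ) : -((l + 1 : ℕ) * (latticeTerm (l + 1 + 1) 1 x).re) / (l + 1 : ℝ) =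
      -(latticeTerm (l + 1 + 1) 1 x).re := by
    push_cast
    field_simp
  rw [sumReLatticeTerm, Finset.sum_range_succ', zero_add, re_latticeTerm_one]
  simp only [hterm, Finset.sum_neg_distrib]
  ring

lemma tendsto_arctan_sub_sum_im_latticeTerm (k : ℕ) :
    Tendsto
      (fun x ↦ Real.arctan x - ∑ l ∈ Finset.range k, (latticeTerm (l + 1) 1 x).im / (l + 1 : ℝ))
      atTop (𝓝 (π / 2)) := by
  have him (l : ℕ) :
      Tendsto (fun x ↦ (latticeTerm (l + 1) 1 x).im / (l + 1 : ℝ)) atTop (𝓝 0) := by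
    have hlim := tendsto_latticeTerm_mul_atTop l.succ_ne_zero one_pos one_pos
    simpa using ((Complex.continuous_im.tendsto 0).comp hlim).div_const (l + 1 : ℝ)
  simpa using (Real.tendsto_arctan_atTop.mono_right nhdsWithin_le_nhds).sub
    (tendsto_finsetSum (Finset.range k) fun l _ ↦ him l)

lemma norm_sumReLatticeTerm_sub_le (k : ℕ) {x y : ℝ} (hxy : x ≤ y) :
    ‖sumReLatticeTerm k y - sumReLatticeTerm k x‖ ≤
      k ^ 2 * Real.arctan y - k ^ 2 * Real.arctan x := by
  refine norm_sub_le_sub_of_norm_deriv_le (fun x ↦ HasDerivAt.fun_sum fun l _ ↦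
    hasDerivAt_re_latticeTerm one_ne_zero (l + 1) x)
    (fun x ↦ (Real.hasDerivAt_arctan x).const_mul (k ^ 2 : ℝ)) (fun x ↦ ?_) hxy
  have hterm : ∀ l ∈ Finset.range k, ‖(l + 1 : ℕ) * (latticeTerm (l + 1 + 1) 1 x).im‖ ≤
      k * (1 / (1 + x ^ 2)) := fun l hl ↦ by
    have hnorm : ‖(latticeTerm (l + 1 + 1) 1 x).im‖ ≤ 1 / (1 + x ^ 2) := by
      refine (Complex.abs_im_le_norm _).trans ?_
      rw [norm_latticeTerm, one_pow, one_div, ← Real.rpow_neg_one]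
      refine Real.rpow_le_rpow_of_exponent_le (by nlinarith) ?_
      push_cast
      linarith [(l.cast_nonneg : (0 : ℝ) ≤ l)]
    rw [norm_mul, Real.norm_natCast]
    gcongr
    exact Finset.mem_range.mp hl
  refine (norm_sum_le_of_le _ hterm).trans_eq ?_
  rw [Finset.sum_const, Finset.card_range, nsmul_eq_mul]
  ring

lemma norm_two_mul_tsum_sumReLatticeTerm_sub_le (hk : k ≠ 0) {δ : ℝ} (hδ : 0 < δ)
    (hsum : Summable fun n : ℕ ↦ sumReLatticeTerm k ((2 * n + 1) * δ)) :
    ‖2 * δ * (∑' n : ℕ, sumReLatticeTerm k ((2 * n + 1) * δ)) - π / 2‖ ≤ k ^ 2 * π * δ := by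
  obtain ⟨k, rfl⟩ := Nat.exists_eq_succ_of_ne_zero hk
  have hmid := norm_smul_tsum_midpoint_sub_le (hasDerivAt_arctan_sub_sum_im_latticeTerm k)
    (fun x y ↦ norm_sumReLatticeTerm_sub_le (k + 1))
    (B := (k + 1 : ℕ) ^ 2 * (π / 2)) (fun x ↦ ?_) (tendsto_arctan_sub_sum_im_latticeTerm k) hδ hsum
  · refine (le_of_eq_of_le ?_ hmid).trans_eq (by ring)
    simp [latticeTerm]
  · rw [Real.arctan_zero, mul_zero, sub_zero]
    gcongr
    exact (Real.arctan_lt_pi_div_two x).le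

/-- The sum of `Re (z ^ (-k))` over the points `z = (2 m + 1) + i (2 n + 1) y` with `m, n : ℕ`. -/
noncomputable def oddQuadrantSum (k : ℕ) (y : ℝ) : ℝ :=
  ∑' p : ℕ × ℕ, (latticeTerm k (2 * p.1 + 1) ((2 * p.2 + 1) * y)).re

lemma tsum_int_prod_eq_four_mul {f : ℤ × ℤ → ℝ} (hf : Summable f)
    (hleft : ∀ m n, f (-(m + 1), n) = f (m, n)) (hright : ∀ m n, f (m, -(n + 1)) = f (m, n)) :
    ∑' p, f p = 4 * ∑' p : ℕ × ℕ, f (p.1, p.2) := by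
  have htsum_int {g : ℤ → ℝ} (hg : Summable g) (hsymm : ∀ m, g (-(m + 1)) = g m) :
      ∑' m, g m = 2 * ∑' m : ℕ, g m := by
    rw [← tsum_nat_add_neg_add_one hg, ← tsum_mul_left]
    simp_rw [hsymm, two_mul]
  have hf' : Summable fun p : ℕ × ℕ ↦ f (p.1, p.2) :=
    hf.comp_injective (Nat.cast_injective.prodMap Nat.cast_injective)
  rw [hf.tsum_prod, htsum_int hf.prod (fun m ↦ by simp_rw [hleft]), hf'.tsum_prod,
    ← tsum_mul_left, ← tsum_mul_left]
  refine tsum_congr fun m ↦ ?_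
  rw [htsum_int (hf.prod_factor m) (hright m)]
  ring

lemma eq_four_mul_oddQuadrantSum (hk : Even k) {y T : ℝ}
    (h : HasSum (fun p : ℤ × ℤ ↦
      (((2 * p.1 + 1 : ℤ) + (2 * p.2 + 1 : ℤ) * (y * I) : ℂ) ^ k)⁻¹) T) :
    T = 4 * oddQuadrantSum k y := by
  have hre : HasSum
      (fun p : ℤ × ℤ ↦ (latticeTerm k (2 * p.1 + 1 : ℤ) ((2 * p.2 + 1 : ℤ) * y)).re) T := by
    simpa [latticeTerm, mul_assoc] using Complex.hasSum_re h
  rw [← hre.tsum_eq, tsum_int_prod_eq_four_mul hre.summable]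
  · simp [oddQuadrantSum]
  · intro m n
    rw [← re_latticeTerm_neg_left hk]
    congr 2
    push_cast
    ring
  · intro m n
    rw [← re_latticeTerm_neg_right]
    congr 2
    push_cast
    ring

lemma summable_odd_rpow {s : ℝ} (hs : s < -1) : Summable fun n : ℕ ↦ (2 * n + 1 : ℝ) ^ s := by
  have hodd := (Real.summable_nat_rpow.mpr hs).comp_injective (i := fun n : ℕ ↦ 2 * n + 1)
    fun m n h ↦ by simpa using h
  simpa [Function.comp_def] using hodd

lemma hasSum_integral_Ioi_re_latticeTerm (hk : 2 < k) (hε : 0 < ε) :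
    HasSum
      (fun p : ℕ × ℕ ↦ ∫ y in Ioi ε, (latticeTerm k (2 * p.1 + 1) ((2 * p.2 + 1) * y)).re)
      (∫ y in Ioi ε, oddQuadrantSum k y) := by
  have hint (p : ℕ × ℕ) := integrableOn_Ioi_re_latticeTerm hk (a := 2 * p.1 + 1)
    (b := 2 * p.2 + 1) (by positivity) (by positivity) hε
  refine hasSum_integral_of_summable_integral_norm hint ?_
  refine .of_nonneg_of_le (fun p ↦ integral_nonneg fun _ ↦ norm_nonneg _) (fun p ↦
    setIntegral_mono_on (hint p).norm (integrableOn_Ioi_const_mul_rpow hk hε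
      ((2 * p.1 + 1) ^ (-(k / 2) : ℝ) * (2 * p.2 + 1) ^ (-(k / 2) : ℝ))) measurableSet_Ioi
    fun y hy ↦ norm_re_latticeTerm_mul_le k (by positivity) (by positivity) (hε.trans hy)) ?_
  have hodd : Summable fun n : ℕ ↦ (2 * n + 1 : ℝ) ^ (-(k / 2) : ℝ) :=
    summable_odd_rpow (by linarith [(Nat.cast_lt (α := ℝ)).mpr hk, Nat.cast_two (R := ℝ)])
  simp_rw [integral_const_mul]
  exact (hodd.mul_of_nonneg hodd (fun _ ↦ by positivity) fun _ ↦ by positivity).mul_right _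

lemma integral_Ioi_re_latticeTerm_eq_mul (hk : 1 < k) {a b : ℝ} (ha : 0 < a) (hb : 0 < b)
    (hε : 0 < ε) : ∫ y in Ioi ε, (latticeTerm (k + 1) a (b * y)).re =
      -(a⁻¹ ^ k / (2 * k)) * (2 * (ε / a)) * sumReLatticeTerm k (b * (ε / a)) := by
  have hmul := mul_sumReLatticeTerm k (b * ε / a)
  rw [integral_Ioi_re_latticeTerm hk ha hb hε, latticeTerm_eq_mul ha.ne', Complex.im_ofReal_mul,
    ← neg_eq_iff_eq_neg.mpr hmul, ← mul_div_assoc b]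
  field_simp

lemma exists_hasSum_integral_Ioi_oddQuadrantSum (hk : 1 < k) (hε : 0 < ε) :
    ∃ J : ℕ → ℝ, (∀ m, ‖J m - π / 2‖ ≤ k ^ 2 * π * ε) ∧
      HasSum (fun m : ℕ ↦ -((2 * m + 1 : ℝ)⁻¹ ^ k / (2 * k)) * J m)
        (∫ y in Ioi ε, oddQuadrantSum (k + 1) y) := by
  have hsum := hasSum_integral_Ioi_re_latticeTerm (k := k + 1) (by lia) hε
  simp_rw [fun p : ℕ × ℕ ↦ integral_Ioi_re_latticeTerm_eq_mul hk (a := 2 * p.1 + 1)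
    (b := 2 * p.2 + 1) (by positivity) (by positivity) hε] at hsum
  have hsummable (m : ℕ) :
      Summable fun n : ℕ ↦ sumReLatticeTerm k ((2 * n + 1) * (ε / (2 * m + 1))) := by
    have hcoeff : -((2 * m + 1 : ℝ)⁻¹ ^ k / (2 * k)) * (2 * (ε / (2 * m + 1))) ≠ 0 :=
      mul_ne_zero (neg_ne_zero.mpr (by positivity)) (by positivity)
    exact (summable_mul_left_iff hcoeff).mp (hsum.summable.prod_factor m)
  refine ⟨fun m ↦ 2 * (ε / (2 * m + 1)) *
    ∑' n : ℕ, sumReLatticeTerm k ((2 * n + 1) * (ε / (2 * m + 1))), fun m ↦ ?_, ?_⟩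
  · refine (norm_two_mul_tsum_sumReLatticeTerm_sub_le (by lia) (by positivity)
      (hsummable m)).trans ?_
    gcongr
    exact div_le_self hε.le (by simp)
  · simpa only [mul_assoc] using hsum.prod_fiberwise fun m ↦ (hsummable m).hasSum.mul_left
      (-((2 * m + 1 : ℝ)⁻¹ ^ k / (2 * k)) * (2 * (ε / (2 * m + 1))))

lemma tendsto_integral_Ioi_oddQuadrantSum (hk : 1 < k) :
    Tendsto (fun ε ↦ ∫ y in Ioi ε, oddQuadrantSum (k + 1) y) (𝓝[>] 0)
      (𝓝 (-(π / (4 * k)) * ∑' m : ℕ, (2 * m + 1 : ℝ)⁻¹ ^ k)) := by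
  have hodd : Summable fun m : ℕ ↦ (2 * m + 1 : ℝ)⁻¹ ^ k := by
    refine (summable_odd_rpow (s := -k) (by simpa using hk)).congr fun m ↦ ?_
    rw [Real.rpow_neg (by positivity), Real.rpow_natCast, inv_pow]
  rw [tendsto_iff_norm_sub_tendsto_zero]
  refine squeeze_zero' (.of_forall fun _ ↦ norm_nonneg _)
    (g := fun ε ↦ (∑' m : ℕ, (2 * m + 1 : ℝ)⁻¹ ^ k) * (k * π / 2 * ε)) ?_ ?_
  · filter_upwards [self_mem_nhdsWithin] with ε hε
    obtain ⟨J, hJ, hsum⟩ := exists_hasSum_integral_Ioi_oddQuadrantSum hk hε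
    refine (hsum.sub (hodd.hasSum.mul_left (-(π / (4 * k))))).norm_le_of_bounded
      (hodd.hasSum.mul_right _) fun m ↦ ?_
    calc _ = ‖(2 * m + 1 : ℝ)⁻¹ ^ k / (2 * k) * (J m - π / 2)‖ := by
          rw [← norm_neg]
          congr 1
          ring
      _ = (2 * m + 1 : ℝ)⁻¹ ^ k / (2 * k) * ‖J m - π / 2‖ := by
          rw [norm_mul, Real.norm_of_nonneg (by positivity)]
      _ ≤ (2 * m + 1 : ℝ)⁻¹ ^ k / (2 * k) * (k ^ 2 * π * ε) := by
          gcongr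
          exact hJ m
      _ = (2 * m + 1 : ℝ)⁻¹ ^ k * (k * π / 2 * ε) := by
          field_simp
  · exact Tendsto.mono_left (Continuous.tendsto' (by fun_prop) 0 0 (by simp)) nhdsWithin_le_nhds

lemma tsum_odd_inv_pow_eq_mul_riemannZeta (hk : 1 < k) :
    ((∑' m : ℕ, (2 * m + 1 : ℝ)⁻¹ ^ k : ℝ) : ℂ) = (1 - 2⁻¹ ^ k) * riemannZeta k := by
  have hsum := Real.summable_nat_pow_inv.mpr hk
  have hsplit := tsum_even_add_odd (f := fun n : ℕ ↦ ((n : ℝ) ^ k)⁻¹)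
    (hsum.comp_injective (i := fun n : ℕ ↦ 2 * n) fun m n h ↦ by simpa using h)
    (hsum.comp_injective (i := fun n : ℕ ↦ 2 * n + 1) fun m n h ↦ by simpa using h)
  have heven : ∑' n : ℕ, (((2 * n : ℕ) : ℝ) ^ k)⁻¹ = 2⁻¹ ^ k * ∑' n : ℕ, ((n : ℝ) ^ k)⁻¹ := by
    simp_rw [← tsum_mul_left, Nat.cast_mul, Nat.cast_two, mul_pow, mul_inv, inv_pow]
  have hodd : ∑' m : ℕ, (2 * m + 1 : ℝ)⁻¹ ^ k = (1 - 2⁻¹ ^ k) * ∑' n : ℕ, ((n : ℝ) ^ k)⁻¹ := by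
    rw [heven] at hsplit
    simp_rw [inv_pow (2 * _ + 1 : ℝ)]
    push_cast at hsplit
    linarith
  rw [hodd, zeta_nat_eq_tsum_of_gt_one hk]
  push_cast
  simp_rw [one_div]

end OddQuadrantSum

section Integrability

variable {k : ℝ}

lemma continuousOn_EllK : ContinuousOn EllK (Ico 0 1) := by
  refine ContinuousOn.congr (fun k hk ↦ ?_) fun k hk ↦ EllK_eq_ellInt hk
  have hellInt := hasDerivAt_ellInt (-1 / 2) (sq_lt_one_of_mem_Ico hk)
  exact (hellInt.continuousAt.comp (f := (· ^ 2)) (by fun_prop)).continuousWithinAt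

lemma rpow_mul_rpow_le_sqrt {x s : ℝ} (hk : k ∈ Ico 0 1) (hx : x ∈ Ioo 0 1)
    (hs : s ∈ Icc 0 (1 / 2)) :
    (1 - x) ^ (1 - s) * (1 - k) ^ s ≤ √((1 - x ^ 2) * (1 - k ^ 2 * x ^ 2)) := by
  have hk₁ : 0 < 1 - k := sub_pos.mpr hk.2
  have hx₁ : 0 < 1 - x := sub_pos.mpr hx.2
  have hkx : 0 ≤ k * x := mul_nonneg hk.1 hx.1.le
  have hk_le : 1 - k ≤ 1 - k * x := sub_le_sub_left (mul_le_of_le_one_right hk.1 hx.2.le) 1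
  have hx_le : 1 - x ≤ 1 - k * x := sub_le_sub_left (mul_le_of_le_one_left hx.1.le hk.2.le) 1
  have hpos : 0 < 1 - k * x := hk₁.trans_le hk_le
  calc (1 - x) ^ (1 - s) * (1 - k) ^ s
      = (1 - x) ^ (1 / 2 : ℝ) * ((1 - x) ^ (1 / 2 - s) * (1 - k) ^ s) := by
        rw [← mul_assoc, ← Real.rpow_add hx₁]
        ring_nf
    _ ≤ (1 - x) ^ (1 / 2 : ℝ) * ((1 - k * x) ^ (1 / 2 - s) * (1 - k * x) ^ s) := by
        have := sub_nonneg.mpr hs.2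
        have := hs.1
        gcongr
    _ = √((1 - x) * (1 - k * x)) := by
        rw [← Real.rpow_add hpos, sub_add_cancel, ← Real.sqrt_eq_rpow, ← Real.sqrt_eq_rpow,
          Real.sqrt_mul hx₁.le]
    _ ≤ √((1 - x ^ 2) * (1 - k ^ 2 * x ^ 2)) := by
        gcongr <;> nlinarith [hx.1]

lemma intervalIntegrable_one_sub_rpow {s : ℝ} (hs : -1 < s) :
    IntervalIntegrable (fun x : ℝ ↦ (1 - x) ^ s) volume 0 1 := by
  simpa using
    ((intervalIntegral.intervalIntegrable_rpow' (a := 0) (b := 1) hs).comp_sub_left 1).symm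

lemma EllK_le {s : ℝ} (hk : k ∈ Ico 0 1) (hs : s ∈ Ioc 0 (1 / 2)) :
    EllK k ≤ (1 - k) ^ (-s) / s := by
  have hk₁ : 0 < 1 - k := sub_pos.mpr hk.2
  have hs₁ : -1 < s - 1 := by linarith [hs.1]
  have hbound : ∀ x ∈ Ioo (0 : ℝ) 1, 1 / √((1 - x ^ 2) * (1 - k ^ 2 * x ^ 2)) ≤
      (1 - x) ^ (s - 1) * (1 - k) ^ (-s) := fun x hx ↦ by
    have hx₁ : 0 < 1 - x := sub_pos.mpr hx.2
    rw [← neg_sub 1 s, Real.rpow_neg hx₁.le, Real.rpow_neg hk₁.le, ← mul_inv, one_div]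
    gcongr
    exact rpow_mul_rpow_le_sqrt hk hx (Ioc_subset_Icc_self hs)
  calc EllK k ≤ ∫ x in (0 : ℝ)..1, (1 - x) ^ (s - 1) * (1 - k) ^ (-s) := by
        refine (Real.le_norm_self _).trans (intervalIntegral.norm_integral_le_of_norm_le
          zero_le_one ?_ ((intervalIntegrable_one_sub_rpow hs₁).mul_const _))
        filter_upwards [Measure.ae_ne volume 1] with x hne hx
        rw [Real.norm_of_nonneg (by positivity)]
        exact hbound x ⟨hx.1, hx.2.lt_of_ne hne⟩
    _ = (1 - k) ^ (-s) / s := by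
        rw [intervalIntegral.integral_mul_const,
          intervalIntegral.integral_comp_sub_left (fun x ↦ x ^ (s - 1)) 1,
          integral_rpow (.inl hs₁)]
        simp [hs.1.ne', div_eq_inv_mul]

lemma integrableOn_EllK_pow (n : ℕ) : IntegrableOn (fun k ↦ EllK k ^ n) (Ioo 0 1) := by
  set s : ℝ := 1 / (2 * (n + 1)) with hs_def
  have hs : s ∈ Ioc 0 (1 / 2) := by
    refine ⟨by positivity, one_div_le_one_div_of_le two_pos ?_⟩
    linarith [n.cast_nonneg (α := ℝ)]
  have hsn : -1 < -s * n := by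
    rw [hs_def, neg_mul, neg_lt_neg_iff, one_div_mul_eq_div, div_lt_one (by positivity)]
    linarith [n.cast_nonneg (α := ℝ)]
  have hint := (intervalIntegrable_iff_integrableOn_Ioo_of_le zero_le_one).mp
    (intervalIntegrable_one_sub_rpow hsn)
  refine (hint.div_const (s ^ n)).mono'
    (((continuousOn_EllK.mono Ioo_subset_Ico_self).pow n).aestronglyMeasurable measurableSet_Ioo)
    ((ae_restrict_iff' measurableSet_Ioo).mpr (.of_forall fun k hk ↦ ?_))
  have hk' := Ioo_subset_Ico_self hk
  have hEllK := (EllK_pos hk').le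
  rw [Real.norm_of_nonneg (pow_nonneg hEllK n), Real.rpow_mul_natCast (sub_nonneg.mpr hk.2.le),
    ← div_pow]
  exact pow_le_pow_left₀ hEllK (EllK_le hk' hs) n

end Integrability

section ChangeOfVariables

variable {k : ℝ}

lemma strictAntiOn_periodRatio : StrictAntiOn periodRatio (Ioo 0 1) := by
  refine strictAntiOn_of_deriv_neg (convex_Ioo 0 1)
    (fun k hk ↦ (hasDerivAt_periodRatio hk).continuousAt.continuousWithinAt) fun k hk ↦ ?_
  rw [interior_Ioo] at hk
  have hk' := Ioo_subset_Ico_self hk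
  have hk₀ := hk.1
  have hk₁ := sub_pos.mpr (sq_lt_one_of_mem_Ico hk')
  have hEllK := EllK_pos hk'
  rw [(hasDerivAt_periodRatio hk).deriv, neg_lt_zero]
  positivity

lemma image_periodRatio : periodRatio '' Ioo 0 1 = Ioi 0 := by
  refine Subset.antisymm ?_ fun y hy ↦ ?_
  · rintro _ ⟨k, hk, rfl⟩
    exact div_pos (EllK_pos (Ioo_subset_Ico_self (sqrt_one_sub_sq_mem_Ioo hk)))
      (EllK_pos (Ioo_subset_Ico_self hk))
  · obtain ⟨k, hk, h, -⟩ := exists_EllK_complementary_eq_mul_and_hasSum hy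
    exact ⟨k, hk, (div_eq_iff (EllK_pos (Ioo_subset_Ico_self hk)).ne').mpr h⟩

lemma oddQuadrantSum_six_periodRatio (hk : k ∈ Ioo 0 1) :
    oddQuadrantSum 6 (periodRatio k) =
      -(1 / 60) * (EllK k ^ 6 * (k ^ 2 * (1 - k ^ 2) * (2 * k ^ 2 - 1))) := by
  have hy : periodRatio k ∈ Ioi 0 := image_periodRatio ▸ mem_image_of_mem _ hk
  obtain ⟨k', hk', h, hsum⟩ := exists_EllK_complementary_eq_mul_and_hasSum hy
  obtain rfl : k' = k := strictAntiOn_periodRatio.injOn hk' hk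
    ((div_eq_iff (EllK_pos (Ioo_subset_Ico_self hk')).ne').mpr h)
  linarith [eq_four_mul_oddQuadrantSum (by decide) hsum]

lemma eqOn_abs_deriv_smul_oddQuadrantSum_six_periodRatio :
    EqOn (fun k ↦ |-(π / (2 * (k * (1 - k ^ 2) * EllK k ^ 2)))| •
        oddQuadrantSum 6 (periodRatio k))
      (fun k ↦ -(π / 120) * (k * (2 * k ^ 2 - 1) * EllK k ^ 4)) (Ioo 0 1) := by
  intro k hk
  have hk' := Ioo_subset_Ico_self hk
  have hk₀ := hk.1
  have hk₁ := sub_pos.mpr (sq_lt_one_of_mem_Ico hk')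
  have hEllK := EllK_pos hk'
  simp only [smul_eq_mul]
  rw [abs_neg, abs_of_pos (by positivity), oddQuadrantSum_six_periodRatio hk]
  field_simp
  ring

lemma integrableOn_oddQuadrantSum_six : IntegrableOn (oddQuadrantSum 6) (Ioi 0) := by
  rw [← image_periodRatio, integrableOn_image_iff_integrableOn_abs_deriv_smul measurableSet_Ioo
    (fun k hk ↦ (hasDerivAt_periodRatio hk).hasDerivWithinAt) strictAntiOn_periodRatio.injOn,
    integrableOn_congr_fun eqOn_abs_deriv_smul_oddQuadrantSum_six_periodRatio measurableSet_Ioo]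
  have hpoly : ContinuousOn (fun k : ℝ ↦ k * (2 * k ^ 2 - 1)) (Icc 0 1) := by fun_prop
  exact ((integrableOn_EllK_pow 4).continuousOn_mul_of_subset hpoly isCompact_Icc
    measurableSet_Ioo Ioo_subset_Icc_self).const_mul _

lemma integral_mul_EllK_pow_four :
    ∫ k in (0 : ℝ)..1, k * (2 * k ^ 2 - 1) * EllK k ^ 4 =
      -(120 / π) * ∫ y in Ioi 0, oddQuadrantSum 6 y := by
  rw [← image_periodRatio, integral_image_eq_integral_abs_deriv_smul measurableSet_Ioo
    (fun k hk ↦ (hasDerivAt_periodRatio hk).hasDerivWithinAt) strictAntiOn_periodRatio.injOn,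
    setIntegral_congr_fun measurableSet_Ioo eqOn_abs_deriv_smul_oddQuadrantSum_six_periodRatio,
    integral_const_mul, intervalIntegral.integral_of_le zero_le_one, integral_Ioc_eq_integral_Ioo,
    ← mul_assoc, show -(120 / π) * -(π / 120) = 1 by field_simp, one_mul]

end ChangeOfVariables

lemma tendsto_setIntegral_Ioi_nhdsGT {E : Type*} [NormedAddCommGroup E] [NormedSpace ℝ E]
    {μ : Measure ℝ} {f : ℝ → E} {a : ℝ} (hf : IntegrableOn f (Ioi a) μ) :
    Tendsto (fun ε ↦ ∫ y in Ioi ε, f y ∂μ) (𝓝[>] a) (𝓝 (∫ y in Ioi a, f y ∂μ)) := by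
  have hcover : AECover (μ.restrict (Ioi a)) (𝓝[>] a) fun ε ↦ Ioi ε :=
    aecover_Ioi_of_Ioi (tendsto_id.mono_right nhdsWithin_le_nhds)
  refine (hcover.integral_tendsto_of_countably_generated hf).congr' ?_
  filter_upwards [self_mem_nhdsWithin] with ε hε
  rw [Measure.restrict_restrict measurableSet_Ioi,
    inter_eq_left.mpr (Ioi_subset_Ioi (mem_Ioi.mp hε).le)]

lemma integral_oddQuadrantSum_six :
    ∫ y in Ioi 0, oddQuadrantSum 6 y = -(π / 20) * ∑' m : ℕ, (2 * m + 1 : ℝ)⁻¹ ^ 5 := by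
  have hlim := tendsto_integral_Ioi_oddQuadrantSum (k := 5) (by norm_num)
  rw [tendsto_nhds_unique (tendsto_setIntegral_Ioi_nhdsGT integrableOn_oddQuadrantSum_six) hlim]
  norm_num

theorem stmt_15 :
    ((∫ k in (0:ℝ)..(1:ℝ), k * (2 * k^2 - 1) * (EllK k)^4 : ℝ) : ℂ)
      = 93/16 * riemannZeta 5 := by
  have hzeta := tsum_odd_inv_pow_eq_mul_riemannZeta (k := 5) (by norm_num)
  have hintegral : ∫ k in (0 : ℝ)..1, k * (2 * k ^ 2 - 1) * EllK k ^ 4 =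
      6 * ∑' m : ℕ, (2 * m + 1 : ℝ)⁻¹ ^ 5 := by
    rw [integral_mul_EllK_pow_four, integral_oddQuadrantSum_six, ← mul_assoc]
    congr 1
    field_simp
    norm_num
  rw [hintegral, Complex.ofReal_mul, hzeta]
  push_cast
  ring
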